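/- arXiv:1601.07343 — 2 statements merged into one kernel-verified Lean document; each statement's English description precedes it below -/
import Mathlib

section
/- No pure double circulant self-dual binary code of length 90 with minimum weight 14 has an extremal self-dual neighbor: if C is such a code and C' is a self-dual code of length 90 with dim(C ∩ C') = 44, then the minimum weight of C' is at most 14. -/
/-- The standard inner product on `ι → ZMod 2`. -/
def dot {ι : Type*} [Fintype ι] (x y : ι → ZMod 2) : ZMod 2 := ∑ i, x i * y i

/-- A binary linear code is self-dual if it coincides with its dual. -/
def IsSelfDual {ι : Type*} [Fintype ι] (C : Submodule (ZMod 2) (ι → ZMod 2)) : Prop :=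
  ∀ x, x ∈ C ↔ ∀ y ∈ C, dot x y = 0

/-- `C` has minimum (nonzero) weight exactly `d`. -/
def MinWeightIs {ι : Type*} [Fintype ι] (C : Submodule (ZMod 2) (ι → ZMod 2)) (d : ℕ) : Prop :=
  (∃ x ∈ C, x ≠ 0 ∧ hammingNorm x = d) ∧ ∀ x ∈ C, x ≠ 0 → d ≤ hammingNorm x

/-- `A_i(C)`: the number of codewords of `C` of Hamming weight `i`. -/
noncomputable def weightEnum {ι : Type*} [Fintype ι] (C : Submodule (ZMod 2) (ι → ZMod 2)) (i : ℕ) : ℕ :=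
  Set.ncard {x : ι → ZMod 2 | x ∈ C ∧ hammingNorm x = i}

/-- Two codes are equivalent if a coordinate permutation maps one onto the other. -/
def CodeEquiv {ι : Type*} [Fintype ι] (C C' : Submodule (ZMod 2) (ι → ZMod 2)) : Prop :=
  ∃ σ : Equiv.Perm ι, Submodule.map (LinearMap.funLeft (ZMod 2) (ZMod 2) ⇑σ) C = C'

/-- The order of the automorphism group of a code: the number of coordinate
permutations mapping the code onto itself. -/
noncomputable def autGroupOrder {ι : Type*} [Fintype ι] (C : Submodule (ZMod 2) (ι → ZMod 2)) : ℕ :=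
  Nat.card {σ : Equiv.Perm ι // Submodule.map (LinearMap.funLeft (ZMod 2) (ZMod 2) ⇑σ) C = C}

/-- A circulant matrix: each row is the cyclic shift of the previous one. -/
def IsCirculant {n : ℕ} (R : Matrix (Fin n) (Fin n) (ZMod 2)) : Prop :=
  ∃ v : Fin n → ZMod 2, R = Matrix.circulant v

/-- The pure double circulant code with generator matrix `(I_n | R)`. -/
def pureDCC {n : ℕ} (R : Matrix (Fin n) (Fin n) (ZMod 2)) :
    Submodule (ZMod 2) (Fin n ⊕ Fin n → ZMod 2) :=
  Submodule.span (ZMod 2)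
    (Set.range fun i : Fin n =>
      Sum.elim (fun j => if j = i then (1 : ZMod 2) else 0) (R i))

/-- A bordered matrix: first row `(0,1,…,1)`, first column `(0,1,…,1)ᵀ`, and
lower-right block an `n × n` circulant matrix. -/
def IsBorderMatrix {n : ℕ} (B : Matrix (Fin (n + 1)) (Fin (n + 1)) (ZMod 2)) : Prop :=
  B 0 0 = 0 ∧ (∀ j, j ≠ 0 → B 0 j = 1) ∧ (∀ i, i ≠ 0 → B i 0 = 1) ∧
  ∃ R' : Matrix (Fin n) (Fin n) (ZMod 2), IsCirculant R' ∧
    ∀ i j : Fin n, B i.succ j.succ = R' i j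

/-- The bordered double circulant code with generator matrix `(I_{n+1} | B)`. -/
def borderedDCC {n : ℕ} (B : Matrix (Fin (n + 1)) (Fin (n + 1)) (ZMod 2)) :
    Submodule (ZMod 2) (Fin (n + 1) ⊕ Fin (n + 1) → ZMod 2) :=
  Submodule.span (ZMod 2)
    (Set.range fun i : Fin (n + 1) =>
      Sum.elim (fun j => if j = i then (1 : ZMod 2) else 0) (B i))

/-!
Let `n` be odd and let `c` be a codeword of even weight in a pure double circulant code of length
`2n`. The sum of its `n` simultaneous cyclic shifts is constant on each half, and the two constants
agree because `c` has even weight; so this sum lies in every code that contains the all-one vector.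
If such a code `C'` meets the double circulant code in a subspace of codimension at most one, then
all shifts outside `C'` have the same nonzero class modulo `C'`. If all `n` shifts were outside
`C'`, their sum would have this class too, as `n` is odd. So some shift of `c` lies in `C'`, and it
has the same weight as `c`.
-/

section Codimension

variable {κ V : Type*} [AddCommGroup V] [Module (ZMod 2) V]

theorem exists_eq_zero_of_sum_eq_zero_of_finrank_le_one [Module.Finite (ZMod 2) V]
    (hV : Module.finrank (ZMod 2) V ≤ 1) {s : Finset κ} (hs : Odd s.card) {f : κ → V}
    (hsum : ∑ i ∈ s, f i = 0) : ∃ i ∈ s, f i = 0 := by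
  by_contra! hne
  obtain ⟨v, hv⟩ := finrank_le_one_iff.1 hV
  have hfv : ∀ i ∈ s, f i = v := by
    intro i hi
    obtain ⟨a, ha⟩ := hv (f i)
    have ha0 : a ≠ 0 := fun h => hne i hi (by rw [← ha, h, zero_smul])
    have ha1 : a = 1 := Fin.eq_one_of_ne_zero a ha0
    rw [← ha, ha1, one_smul]
  obtain ⟨i, hi⟩ := Finset.card_pos.1 hs.pos
  refine hne i hi ?_
  calc
    f i = (s.card : ZMod 2) • v := by rw [hfv i hi, ZMod.natCast_eq_one_iff_odd.2 hs, one_smul]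
    _ = ∑ i ∈ s, f i := by rw [Finset.sum_congr rfl hfv, Finset.sum_const, Nat.cast_smul_eq_nsmul]
    _ = 0 := hsum

theorem exists_mem_of_sum_mem_of_finrank_le_inf_add_one {C D : Submodule (ZMod 2) V}
    [Module.Finite (ZMod 2) C]
    (hCD : Module.finrank (ZMod 2) C ≤ Module.finrank (ZMod 2) ↥(C ⊓ D) + 1)
    {s : Finset κ} (hs : Odd s.card) {f : κ → V} (hfC : ∀ i, f i ∈ C)
    (hsum : ∑ i ∈ s, f i ∈ D) : ∃ i ∈ s, f i ∈ D := by
  have hquot : Module.finrank (ZMod 2) (C ⧸ D.comap C.subtype) ≤ 1 := by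
    have hdim := (D.comap C.subtype).finrank_quotient_add_finrank
    rw [← Submodule.finrank_map_subtype_eq, Submodule.map_comap_subtype] at hdim
    lia
  have hclass (x : C) : (D.comap C.subtype).mkQ x = 0 ↔ (x : V) ∈ D := by simp
  obtain ⟨i, hi, hfi⟩ := exists_eq_zero_of_sum_eq_zero_of_finrank_le_one hquot hs
    (f := fun i => (D.comap C.subtype).mkQ ⟨f i, hfC i⟩) (by
      rw [← map_sum, hclass]
      simpa using hsum)
  exact ⟨i, hi, (hclass _).1 hfi⟩

end Codimension

section SelfDual

variable {ι : Type*} [Fintype ι] {C : Submodule (ZMod 2) (ι → ZMod 2)}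

theorem dot_self (x : ι → ZMod 2) : dot x x = ∑ i, x i :=
  Finset.sum_congr rfl fun i _ => by rw [← sq, ZMod.pow_card]

theorem IsSelfDual.sum_eq_zero (hC : IsSelfDual C) {x : ι → ZMod 2} (hx : x ∈ C) :
    ∑ i, x i = 0 := by
  rw [← dot_self]
  exact (hC x).1 hx x hx

theorem IsSelfDual.one_mem (hC : IsSelfDual C) : 1 ∈ C :=
  (hC 1).2 fun y hy => by simpa [dot] using hC.sum_eq_zero hy

end SelfDual

theorem hammingNorm_comp_equiv {ι κ α : Type*} [Fintype ι] [Fintype κ] [Zero α] [DecidableEq α]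
    (e : ι ≃ κ) (x : κ → α) : hammingNorm (x ∘ e) = hammingNorm x :=
  Finset.card_equiv e fun i => by simp

section BlockShift

/-- The simultaneous translation of both halves of the coordinate set `G ⊕ G`; for `G = Fin n`
this is the `g`-fold cyclic shift of both halves of a word of length `2n`. -/
def blockShift {G : Type*} [AddGroup G] (g : G) : Equiv.Perm (G ⊕ G) :=
  Equiv.sumCongr (Equiv.addRight g) (Equiv.addRight g)

variable {G : Type*} [AddGroup G] [Fintype G]

theorem sum_comp_blockShift {x : G ⊕ G → ZMod 2} (hx : ∑ i, x i = 0) :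
    ∑ g, x ∘ blockShift g = (∑ g, x (Sum.inl g)) • (1 : G ⊕ G → ZMod 2) := by
  have hhalves : ∑ g, x (Sum.inl g) = ∑ g, x (Sum.inr g) := by
    rwa [Fintype.sum_sum_type, ← ZModModule.sub_eq_add, sub_eq_zero] at hx
  funext i
  rw [Finset.sum_apply, Pi.smul_apply, Pi.one_apply, smul_eq_mul, mul_one]
  rcases i with i | i
  · exact Equiv.sum_comp (Equiv.addLeft i) fun g => x (Sum.inl g)
  · rw [hhalves]
    exact Equiv.sum_comp (Equiv.addLeft i) fun g => x (Sum.inr g)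

theorem exists_comp_blockShift_mem (hG : Odd (Fintype.card G))
    {C C' : Submodule (ZMod 2) (G ⊕ G → ZMod 2)}
    (hdim : Module.finrank (ZMod 2) C ≤ Module.finrank (ZMod 2) ↥(C ⊓ C') + 1)
    (hone : 1 ∈ C') {c : G ⊕ G → ZMod 2} (hshift : ∀ g, c ∘ blockShift g ∈ C)
    (hc : ∑ i, c i = 0) : ∃ g, c ∘ blockShift g ∈ C' := by
  have hsum : ∑ g, c ∘ blockShift g ∈ C' := by
    rw [sum_comp_blockShift hc]
    exact C'.smul_mem _ hone
  obtain ⟨g, -, hg⟩ := exists_mem_of_sum_mem_of_finrank_le_inf_add_one hdim hG hshift hsum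
  exact ⟨g, hg⟩

end BlockShift

section PureDoubleCirculant

variable {n : ℕ} {R : Matrix (Fin n) (Fin n) (ZMod 2)}

theorem finrank_pureDCC_le (R : Matrix (Fin n) (Fin n) (ZMod 2)) :
    Module.finrank (ZMod 2) (pureDCC R) ≤ n := by
  simpa only [Fintype.card_fin] using! finrank_range_le_card (R := ZMod 2) fun i : Fin n =>
    (Sum.elim (fun j => if j = i then (1 : ZMod 2) else 0) (R i) : Fin n ⊕ Fin n → ZMod 2)

theorem comp_blockShift_mem_pureDCC [NeZero n] (hR : IsCirculant R)
    {c : Fin n ⊕ Fin n → ZMod 2} (hc : c ∈ pureDCC R) (k : Fin n) :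
    c ∘ blockShift k ∈ pureDCC R := by
  obtain ⟨v, rfl⟩ := hR
  suffices hle : pureDCC (Matrix.circulant v) ≤
      (pureDCC (Matrix.circulant v)).comap (LinearMap.funLeft (ZMod 2) (ZMod 2) (blockShift k)) from
    hle hc
  refine Submodule.span_le.2 ?_
  rintro _ ⟨i, rfl⟩
  refine Submodule.subset_span ⟨i - k, ?_⟩
  funext j
  rcases j with j | j
  · simp [LinearMap.funLeft, blockShift, eq_sub_iff_add_eq]
  · simp [LinearMap.funLeft, blockShift, Matrix.circulant_apply, sub_sub, add_comm]

theorem no_extremal_selfdual_neighbor_90_general (hn : Odd n) (hR : IsCirculant R)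
    {C' : Submodule (ZMod 2) (Fin n ⊕ Fin n → ZMod 2)} (hone : 1 ∈ C')
    (hnb : n ≤ Module.finrank (ZMod 2) ↥(pureDCC R ⊓ C') + 1)
    {c : Fin n ⊕ Fin n → ZMod 2} (hc : c ∈ pureDCC R) (heven : ∑ i, c i = 0) :
    ∃ x ∈ C', hammingNorm x = hammingNorm c := by
  have : NeZero n := ⟨hn.pos.ne'⟩
  obtain ⟨k, hk⟩ := exists_comp_blockShift_mem (by rwa [Fintype.card_fin])
    ((finrank_pureDCC_le R).trans hnb) hone (comp_blockShift_mem_pureDCC hR hc) heven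
  exact ⟨_, hk, hammingNorm_comp_equiv (blockShift k) c⟩

end PureDoubleCirculant

theorem no_extremal_selfdual_neighbor_90 (R : Matrix (Fin 45) (Fin 45) (ZMod 2))
    (hR : IsCirculant R) (hsd : IsSelfDual (pureDCC R))
    (hmin : MinWeightIs (pureDCC R) 14)
    (C' : Submodule (ZMod 2) (Fin 45 ⊕ Fin 45 → ZMod 2)) (hC' : IsSelfDual C')
    (hnb : Module.finrank (ZMod 2) ↥(pureDCC R ⊓ C') = 44) :
    ∃ x ∈ C', x ≠ 0 ∧ hammingNorm x ≤ 14 := by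
  obtain ⟨⟨c, hc, -, hcw⟩, -⟩ := hmin
  obtain ⟨x, hx, hxc⟩ := no_extremal_selfdual_neighbor_90_general (by decide) hR hC'.one_mem
    (by lia) hc (hsd.sum_eq_zero hc)
  exact ⟨x, hx, hammingNorm_ne_zero_iff.1 (by lia), by lia⟩
end

section
/- Every bordered double circulant doubly even self-dual binary code of length 96 with minimum weight 16 has automorphism group of order exactly 94, where the automorphism group is the group of coordinate permutations mapping the code onto itself. -/
/-!
Let `p = 2 * q + 1` with `p`, `q` prime and `q ≡ 3 [MOD 4]`; for length 96, `p = 47` and `q = 23`.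
The automorphism group `G` of the code contains the cyclic group `P` of order `p` of simultaneous
shifts and, by self-duality, an involution `τ` that swaps the halves and inverts `P`. So it suffices
that the stabilizer in `G` of the border coordinate `∞` of the first half is `P`, and that the orbit
of `∞` consists of the two border coordinates.

*Stabilizer.* An element fixing `∞` and normalizing `P` acts affinely on the cyclic coordinates, and
the circulant block admits no nontrivial affine symmetry: a multiplier would make its weight
incompatible with double evenness, or make it constant off one point, which produces a codeword of
weight at most 4. Hence `P` is its own normalizer in the stabilizer, which therefore has a normal
`p`-complement `K`. Every `P`-invariant Sylow subgroup of `K` fixes the other border coordinate,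
because otherwise an orbit would have length `p + 1` or `2 * p + 1`, not a prime power. Being
normalized by `P` and of order prime to `p`, it can then only swap coordinates in fixed pairs. The
sets of pairs that can be swapped form a cyclic code inside the cyclic code of unions of pairs that
are codewords. Neither contains the all-one word, so both dimensions are divisible by `q`; dimension
`2 * q` would force a codeword of weight 4. So the two codes coincide unless the first one is zero.
But then they are closed under multiplication by a family of functions that separates the pairs,
which yields a word of weight 1.

*Orbit.* By shift invariance and `τ`, the orbit of `∞` otherwise contains every coordinate. Then `G`
acts on the `p + 1` cosets of the normalizer of `P`, and `τ` acts as an odd permutation since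
`p ≡ 3 [MOD 4]`. In the index two subgroup of even elements `P` is its own normalizer, so there is a
normal `p`-complement of order `p + 1`. Its `P`-invariant Sylow subgroup at an odd prime dividing
`p + 1` has odd order less than `p + 1`, so it fixes `∞` and lies in `P`, which is absurd.
-/

namespace DoubleCirculant

section GroupTheory

open Subgroup MulAction
open scoped Pointwise

variable {G : Type*} [Group G] [Finite G] {p : ℕ} [Fact p.Prime]

theorem not_dvd_index_of_normalizer_le {P : Subgroup G} (hP : IsPGroup p P)
    (hN : normalizer (P : Set G) ≤ P) : ¬ p ∣ P.index := by
  intro hdvd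
  obtain ⟨n, hn⟩ := IsPGroup.iff_card.mp hP
  have hG : p ^ (n + 1) ∣ Nat.card G := by
    rw [← P.card_mul_index, hn, pow_succ]
    exact mul_dvd_mul_left _ hdvd
  have hNP : p ^ (n + 1) ∣ p ^ n :=
    hn ▸ (Sylow.prime_pow_dvd_card_normalizer hG hn).trans (card_dvd_of_le hN)
  exact absurd ((Nat.pow_dvd_pow_iff_le_right (Fact.out : p.Prime).one_lt).mp hNP) (by omega)

theorem exists_normal_isComplement'_of_normalizer_le {P : Subgroup G} [IsMulCommutative P]
    (hP : IsPGroup p P) (hN : normalizer (P : Set G) ≤ P) :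
    ∃ K : Subgroup G, K.Normal ∧ K.IsComplement' P ∧ ¬ p ∣ Nat.card K := by
  let S : Sylow p G := hP.toSylow (not_dvd_index_of_normalizer_le hP hN)
  have hS : normalizer (S : Set G) ≤ centralizer (S : Set G) := hN.trans (le_centralizer P)
  exact ⟨(MonoidHom.transferSylow S hS).ker, inferInstance,
    MonoidHom.ker_transferSylow_isComplement' S hS, MonoidHom.not_dvd_card_ker_transferSylow S hS⟩

theorem exists_complement_le_of_inf_normalizer_le {H P : Subgroup G} [IsMulCommutative P]
    (hP : IsPGroup p P) (hPH : P ≤ H) (hN : H ⊓ normalizer (P : Set G) ≤ P) :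
    ∃ K ≤ H, P ≤ normalizer (K : Set G) ∧ Nat.card K * Nat.card P = Nat.card H ∧
      ¬ p ∣ Nat.card K := by
  have hN' : normalizer (P.subgroupOf H : Set H) ≤ P.subgroupOf H := by
    rw [← subgroupOf_normalizer_eq hPH]
    exact fun h hh => hN ⟨h.2, hh⟩
  obtain ⟨K, hK, hKP, hpK⟩ := exists_normal_isComplement'_of_normalizer_le
    (P := P.subgroupOf H) hP.comap_subtype hN'
  have hcard : Nat.card (K.map H.subtype) = Nat.card K :=
    card_map_of_injective H.subtype_injective
  refine ⟨K.map H.subtype, map_subtype_le K, ?_, ?_, hcard ▸ hpK⟩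
  · rw [le_normalizer_iff]
    rintro s hs _ ⟨k, hk, rfl⟩
    exact ⟨⟨s, hPH hs⟩ * k * ⟨s, hPH hs⟩⁻¹, hK.conj_mem k hk _, rfl⟩
  · rw [hcard, ← hKP.card_mul_card, Nat.card_congr (subgroupOfEquivOfLe hPH).toEquiv]

theorem exists_sylow_le_of_le_normalizer {K P : Subgroup G} (hP : IsPGroup p P)
    (hPK : P ≤ normalizer (K : Set G)) (hpK : ¬ p ∣ Nat.card K) (r : ℕ) [Fact r.Prime] :
    ∃ Q ≤ K, P ≤ normalizer (Q : Set G) ∧ Nat.card Q = r ^ (Nat.card K).factorization r := by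
  let P' := P.subgroupOf (normalizer (K : Set G))
  have hP' : IsPGroup p P' := hP.comap_subtype
  have hSyl : ¬ p ∣ Nat.card (Sylow r K) := fun h =>
    hpK (h.trans ((default : Sylow r K).card_dvd_index.trans (index_dvd_card _)))
  obtain ⟨Q, hQ⟩ := hP'.nonempty_fixed_point_of_prime_not_dvd_card (Sylow r K) hSyl
  refine ⟨(Q : Subgroup K).map K.subtype, map_subtype_le _, ?_, ?_⟩
  · rw [le_normalizer_iff]
    rintro s hs _ ⟨k, hk, rfl⟩
    let s' : normalizer (K : Set G) := ⟨s, hPK hs⟩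
    have hsQ : s' • (Q : Subgroup K) = Q := congrArg Sylow.toSubgroup (hQ ⟨s', hs⟩)
    have hsk : s' • k ∈ (Q : Subgroup K) := hsQ ▸ smul_mem_pointwise_smul k s' _ hk
    exact ⟨s' • k, hsk, rfl⟩
  · rw [card_map_of_injective K.subtype_injective]
    exact Q.card_eq_multiplicity

theorem smul_mem_orbit_smul_of_mem_normalizer {α : Type*} {G : Type*} [Group G] [MulAction G α]
    {K : Subgroup G} {g : G} (hg : g ∈ normalizer (K : Set G)) {a b : α} (hab : b ∈ orbit K a) :
    g • b ∈ orbit K (g • a) := by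
  obtain ⟨k, rfl⟩ := hab
  refine ⟨⟨g * k * g⁻¹, (mem_normalizer_iff.mp hg k).mp k.2⟩, ?_⟩
  simp only [Subgroup.smul_def, smul_smul, inv_mul_cancel_right]

end GroupTheory

section Sign

open Equiv.Perm

variable {Ω : Type*} {s t : Equiv.Perm Ω}

theorem conj_zpow_apply_of_conj_eq_inv (hst : t * s * t⁻¹ = s⁻¹) (k : ℤ) (z : Ω) :
    t ((s ^ k) z) = (s ^ (-k)) (t z) := by
  have h : t * s ^ k = s ^ (-k) * t := by
    rw [← mul_inv_eq_iff_eq_mul, ← conj_zpow, hst, inv_zpow']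
  exact congrArg (fun f : Equiv.Perm Ω => f z) h

theorem eq_of_sameCycle_of_conj_eq_inv (hs : Odd (orderOf s)) (hst : t * s * t⁻¹ = s⁻¹)
    {y z : Ω} (hyz : s.SameCycle y z) (hy : t y = y) (hz : t z = z) : y = z := by
  obtain ⟨k, rfl⟩ := hyz
  have hk : (s ^ (2 * k)) y = y := by
    rw [conj_zpow_apply_of_conj_eq_inv hst, hy] at hz
    rw [two_mul, zpow_add, mul_apply, ← hz, ← mul_apply, ← zpow_add, add_neg_cancel, zpow_zero,
      one_apply]
  obtain ⟨m, hm⟩ := hs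
  have hk' : s ^ k = (s ^ (2 * k)) ^ (m + 1) := by
    have h1 : s ^ k = s ^ k * (s ^ orderOf s) ^ k := by rw [pow_orderOf_eq_one, one_zpow, mul_one]
    rw [h1, hm, ← zpow_natCast, ← zpow_natCast, ← zpow_mul, ← zpow_mul, ← zpow_add]
    congr 1
    push_cast
    ring
  rw [hk']
  exact (pow_apply_eq_self_of_apply_eq_self hk _).symm

variable [Fintype Ω] [DecidableEq Ω]

theorem card_fixedPoints_of_conj_eq_inv {p : ℕ} (hp : p.Prime) (hodd : Odd p)
    (hΩ : Fintype.card Ω = p + 1) (hs : orderOf s = p) (ht : t * t = 1)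
    (hst : t * s * t⁻¹ = s⁻¹) : Fintype.card (Function.fixedPoints t) = 2 := by
  have hcyc : s.IsCycle := isCycle_of_prime_order' (hs ▸ hp) (by have := hp.two_le; omega)
  obtain ⟨o, ho⟩ : ∃ o, s.supportᶜ = {o} := by
    rw [← Finset.card_eq_one, Finset.card_compl, ← hcyc.orderOf, hs, hΩ, Nat.add_sub_cancel_left]
  have hfix (z : Ω) : s z = z ↔ z = o := by
    have := Finset.ext_iff.mp ho z
    rwa [Finset.mem_compl, mem_support, not_not, Finset.mem_singleton] at this
  have hto : t o = o := by
    have h := conj_zpow_apply_of_conj_eq_inv hst (-1) o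
    rw [zpow_neg_one, inv_eq_iff_eq.mpr ((hfix o).mpr rfl).symm, neg_neg, zpow_one] at h
    exact (hfix _).mp h.symm
  have hle : Fintype.card (Function.fixedPoints t) ≤ 2 := by
    rw [Fintype.card_subtype]
    by_contra! h
    obtain ⟨a, b, c, ha, hb, hc, hab, hac, hbc⟩ := Finset.two_lt_card_iff.mp h
    simp only [Finset.mem_filter, Finset.mem_univ, true_and] at ha hb hc
    have key {y z : Ω} (hy : t y = y) (hz : t z = z) (hyz : y ≠ z) : y = o ∨ z = o := by
      by_contra! hne
      exact hyz (eq_of_sameCycle_of_conj_eq_inv (hs ▸ hodd) hst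
        (hcyc.sameCycle (mt (hfix y).mp hne.1) (mt (hfix z).mp hne.2)) hy hz)
    have := key ha hb hab
    have := key ha hc hac
    have := key hb hc hbc
    grind
  have hpos : 0 < Fintype.card (Function.fixedPoints t) := Fintype.card_pos_iff.mpr ⟨⟨o, hto⟩⟩
  have hmod : Fintype.card Ω ≡ Fintype.card (Function.fixedPoints t) [MOD 2] := by
    have : Fact (Nat.Prime 2) := ⟨Nat.prime_two⟩
    refine card_fixedPoints_modEq (f := (t : Ω → Ω)) (n := 1) ?_
    funext z
    exact congrArg (fun f : Equiv.Perm Ω => f z) ((pow_two t).trans ht)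
  obtain ⟨m, rfl⟩ := hodd
  rw [hΩ] at hmod
  unfold Nat.ModEq at hmod
  omega

theorem sign_of_conj_eq_inv {p : ℕ} (hp : p.Prime) (hodd : Odd p)
    (hΩ : Fintype.card Ω = p + 1) (hs : orderOf s = p) (ht : t * t = 1)
    (hst : t * s * t⁻¹ = s⁻¹) : sign t = (-1) ^ ((p - 1) / 2) := by
  rw [sign_of_pow_two_eq_one (by rw [sq, ht]), hΩ,
    card_fixedPoints_of_conj_eq_inv hp hodd hΩ hs ht hst]
  rfl

theorem exists_index_eq_two_notMem {G : Type*} [Group G] {N : Subgroup G} {p : ℕ} (hp : p.Prime)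
    (hmod : p % 4 = 3) (hN : N.index = p + 1) {s t : G} (hs : s ^ p = 1) (hsN : s ∉ N.normalCore)
    (ht : t * t = 1) (hst : t * s * t⁻¹ = s⁻¹) : ∃ M : Subgroup G, M.index = 2 ∧ t ∉ M := by
  classical
  have : Finite (G ⧸ N) := Nat.finite_of_card_ne_zero (hN.trans_ne p.succ_ne_zero)
  let _ := Fintype.ofFinite (G ⧸ N)
  let ρ := MulAction.toPermHom G (G ⧸ N)
  have hρs : orderOf (ρ s) = p := by
    have := Fact.mk hp
    refine orderOf_eq_prime (by rw [← map_pow, hs, map_one]) fun h => hsN ?_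
    rwa [Subgroup.normalCore_eq_ker]
  have hsign : sign (ρ t) = -1 := by
    rw [sign_of_conj_eq_inv hp (Nat.odd_iff.mpr (by omega))
      (Nat.card_eq_fintype_card.symm.trans hN) hρs (by rw [← map_mul, ht, map_one])
      (by rw [← map_mul, ← map_inv, ← map_mul, hst, map_inv])]
    exact Odd.neg_one_pow (Nat.odd_iff.mpr (by omega))
  refine ⟨(sign.comp ρ).ker, ?_, fun h => ?_⟩
  · have hrange : (sign.comp ρ).range = ⊤ := by
      refine MonoidHom.range_eq_top.mpr fun x => ?_
      rcases Int.units_eq_one_or x with rfl | rfl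
      · exact ⟨1, map_one _⟩
      · exact ⟨t, hsign⟩
    rw [Subgroup.index_ker, hrange, Subgroup.card_top, Nat.card_eq_fintype_card]
    rfl
  · exact absurd (hsign.symm.trans h) (by decide)

end Sign

section AutomorphismGroup

variable {ι κ : Type*}

/-- The automorphism group of a binary code, as a subgroup of the group of permutations of the
coordinates; its order is `autGroupOrder`. -/
def autGroup (C : Submodule (ZMod 2) (ι → ZMod 2)) : Subgroup (Equiv.Perm ι) where
  carrier := {σ | C.map (LinearMap.funLeft (ZMod 2) (ZMod 2) σ) = C}
  one_mem' := Submodule.map_id C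
  mul_mem' {σ τ} hσ hτ := by
    rw [Set.mem_ofPred_eq, Equiv.Perm.coe_mul, LinearMap.funLeft_comp, Submodule.map_comp, hσ, hτ]
  inv_mem' {σ} hσ := by
    rw [Set.mem_ofPred_eq]
    conv_lhs => rw [← hσ]
    rw [← Submodule.map_comp, ← LinearMap.funLeft_comp, ← Equiv.Perm.coe_mul, mul_inv_cancel]
    exact Submodule.map_id C

variable {C : Submodule (ZMod 2) (ι → ZMod 2)}

theorem comp_mem_iff_of_mem_autGroup {σ : Equiv.Perm ι} (hσ : σ ∈ autGroup C) (u : ι → ZMod 2) :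
    u ∘ σ ∈ C ↔ u ∈ C := by
  have hmap : C.map (LinearMap.funLeft (ZMod 2) (ZMod 2) σ) = C := hσ
  conv_lhs => rw [← hmap]
  exact (LinearMap.funLeft_injective_of_surjective (ZMod 2) (ZMod 2) σ
    σ.surjective).mem_set_image (s := (C : Set (ι → ZMod 2))) (a := u)

theorem mem_autGroup_of_forall_comp_mem [Finite ι] {σ : Equiv.Perm ι} (h : ∀ u ∈ C, u ∘ σ ∈ C) :
    σ ∈ autGroup C := by
  refine Submodule.eq_of_le_of_finrank_eq (Submodule.map_le_iff_le_comap.mpr h) ?_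
  exact (Submodule.equivMapOfInjective _
    (LinearMap.funLeft_injective_of_surjective _ _ σ σ.surjective) C).finrank_eq.symm

theorem mem_autGroup [Finite ι] {σ : Equiv.Perm ι} : σ ∈ autGroup C ↔ ∀ u, u ∘ σ ∈ C ↔ u ∈ C :=
  ⟨comp_mem_iff_of_mem_autGroup, fun h => mem_autGroup_of_forall_comp_mem fun u => (h u).mpr⟩

variable [Fintype ι] [Fintype κ]

theorem autGroupOrder_comap_funLeft (e : ι ≃ κ) :
    autGroupOrder (C.comap (LinearMap.funLeft (ZMod 2) (ZMod 2) e)) = autGroupOrder C := by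
  refine Nat.card_congr (e.symm.permCongr.subtypeEquiv fun σ => ?_)
  refine mem_autGroup.trans (.trans ⟨fun h u => ?_, fun h u => ?_⟩ mem_autGroup.symm)
  · have := h (u ∘ e.symm)
    simpa [Submodule.mem_comap, LinearMap.funLeft, Function.comp_def] using this
  · have := h (u ∘ e)
    simpa [Submodule.mem_comap, LinearMap.funLeft, Function.comp_def] using this

theorem isSelfDual_comap_funLeft (hC : IsSelfDual C) (e : ι ≃ κ) :
    IsSelfDual (C.comap (LinearMap.funLeft (ZMod 2) (ZMod 2) e)) := by
  have hdot (x y : κ → ZMod 2) : dot (x ∘ e) (y ∘ e) = dot x y :=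
    e.sum_comp fun i => x i * y i
  intro x
  refine (hC (x ∘ e)).trans ⟨fun h y hy => hdot x y ▸ h _ hy, fun h y hy => ?_⟩
  obtain ⟨y, rfl⟩ : ∃ y', y' ∘ e = y := ⟨y ∘ e.symm, by simp [Function.comp_assoc]⟩
  exact (hdot x y).trans (h y hy)

theorem hammingNorm_eq_sum_val (u : ι → ZMod 2) : hammingNorm u = ∑ i, (u i).val := by
  have hval (a : ZMod 2) : (if a ≠ 0 then 1 else 0) = a.val := by decide +revert
  rw [hammingNorm, Finset.card_filter]
  exact Finset.sum_congr rfl fun i _ => hval (u i)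

theorem hammingNorm_comp_equiv (e : ι ≃ κ) (u : κ → ZMod 2) :
    hammingNorm (u ∘ e) = hammingNorm u := by
  simp only [hammingNorm_eq_sum_val]
  exact e.sum_comp fun i => (u i).val

theorem hammingNorm_le_card_of_support_subset {u : ι → ZMod 2} (s : Finset ι)
    (h : ∀ i, u i ≠ 0 → i ∈ s) : hammingNorm u ≤ s.card :=
  Finset.card_le_card fun i hi => h i (Finset.mem_filter.mp hi).2

end AutomorphismGroup

section SystematicCode

open Matrix

variable {κ : Type*} [DecidableEq κ] {A : Matrix κ κ (ZMod 2)}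

/-- The code with generator matrix `(I | A)`; the generators are written as in `borderedDCC`. -/
def systematicCode (A : Matrix κ κ (ZMod 2)) : Submodule (ZMod 2) (κ ⊕ κ → ZMod 2) :=
  Submodule.span (ZMod 2)
    (Set.range fun i => Sum.elim (fun j => if j = i then (1 : ZMod 2) else 0) (A i))

theorem row_mem_systematicCode (A : Matrix κ κ (ZMod 2)) (i : κ) :
    Sum.elim (fun j => if j = i then (1 : ZMod 2) else 0) (A i) ∈ systematicCode A :=
  Submodule.subset_span ⟨i, rfl⟩

theorem mem_systematicCode [Fintype κ] {u : κ ⊕ κ → ZMod 2} :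
    u ∈ systematicCode A ↔ u ∘ Sum.inr = (u ∘ Sum.inl) ᵥ* A := by
  have hsum (c : κ → ZMod 2) :
      ∑ i, c i • Sum.elim (fun j => if j = i then (1 : ZMod 2) else 0) (A i) =
        Sum.elim c (c ᵥ* A) := by
    ext (j | j) <;> simp [vecMul, dotProduct]
  rw [systematicCode, Submodule.mem_span_range_iff_exists_fun]
  simp only [hsum]
  refine ⟨?_, fun h => ⟨u ∘ Sum.inl, ?_⟩⟩
  · rintro ⟨c, rfl⟩
    rw [Sum.elim_comp_inr, Sum.elim_comp_inl]
  · rw [← h, Sum.elim_comp_inl_inr]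

theorem systematicCode_submatrix [Finite κ] {μ : Type*} [DecidableEq μ] (e : κ ≃ μ) :
    systematicCode (A.submatrix e.symm e.symm) =
      (systematicCode A).comap (LinearMap.funLeft (ZMod 2) (ZMod 2) (e.sumCongr e)) := by
  cases nonempty_fintype κ
  have := Fintype.ofEquiv κ e
  ext u
  have hmul : (u ∘ Sum.inl) ᵥ* A.submatrix e.symm e.symm =
      ((u ∘ Sum.inl ∘ e) ᵥ* A) ∘ e.symm := submatrix_vecMul_equiv A (u ∘ Sum.inl) e.symm e.symm
  rw [mem_systematicCode, Submodule.mem_comap, mem_systematicCode, hmul, Equiv.eq_comp_symm]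
  rfl

theorem mul_transpose_eq_one_of_isSelfDual [Fintype κ] (h : IsSelfDual (systematicCode A)) :
    A * Aᵀ = 1 := by
  ext i j
  have hij := (h _).mp (row_mem_systematicCode A i) _ (row_mem_systematicCode A j)
  simp only [dot, Fintype.sum_sum_type, Sum.elim_inl, Sum.elim_inr, ite_mul, one_mul, zero_mul,
    Finset.sum_ite_eq', Finset.mem_univ, if_true] at hij
  rw [mul_apply, one_apply]
  exact (CharTwo.add_eq_zero.mp hij).symm

theorem sumCongr_mem_autGroup [Finite κ] {σ : Equiv.Perm κ} (hσ : A.submatrix σ σ = A) :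
    σ.sumCongr σ ∈ autGroup (systematicCode A) := by
  cases nonempty_fintype κ
  refine mem_autGroup_of_forall_comp_mem fun u hu => ?_
  rw [mem_systematicCode] at hu ⊢
  have h := submatrix_vecMul_equiv A (u ∘ Sum.inl ∘ σ) σ σ
  rw [hσ, Function.comp_assoc, Function.comp_assoc, σ.self_comp_symm, Function.comp_id, ← hu] at h
  exact h.symm

theorem sumComm_mem_autGroup [Fintype κ] (hA : A * Aᵀ = 1) {σ : Equiv.Perm κ}
    (hσ : Aᵀ.submatrix σ σ = A) :
    (Equiv.sumComm κ κ).trans (σ.sumCongr σ) ∈ autGroup (systematicCode A) := by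
  refine mem_autGroup_of_forall_comp_mem fun u hu => ?_
  rw [mem_systematicCode] at hu ⊢
  have h := submatrix_vecMul_equiv Aᵀ (u ∘ Sum.inr ∘ σ) σ σ
  rw [hσ, Function.comp_assoc, Function.comp_assoc, σ.self_comp_symm, Function.comp_id, hu,
    vecMul_vecMul, hA, vecMul_one] at h
  exact h.symm

end SystematicCode

section Coordinates

open Equiv

variable {p : ℕ}

/-- The coordinates of a bordered double circulant code of length `2 * (p + 1)`: each half of the
coordinates is a copy of the cyclic group together with a border coordinate `none`. -/
abbrev Point (p : ℕ) := Option (ZMod p) ⊕ Option (ZMod p)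

/-- The simultaneous cyclic shift by `c` of both halves, which fixes the two border coordinates. -/
def translate (c : ZMod p) : Perm (Point p) :=
  (Equiv.addRight c).optionCongr.sumCongr (Equiv.addRight c).optionCongr

/-- The involution that exchanges the two halves and negates the cyclic coordinates. -/
def negSwap (p : ℕ) : Perm (Point p) :=
  (Equiv.sumComm _ _).trans ((Equiv.neg (ZMod p)).optionCongr.sumCongr (Equiv.neg _).optionCongr)

@[simp] theorem translate_inl_none (c : ZMod p) : translate c (.inl none) = .inl none := rfl

@[simp] theorem translate_inr_none (c : ZMod p) : translate c (.inr none) = .inr none := rfl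

@[simp] theorem translate_inl_some (c i : ZMod p) :
    translate c (.inl (some i)) = .inl (some (i + c)) := rfl

@[simp] theorem translate_inr_some (c i : ZMod p) :
    translate c (.inr (some i)) = .inr (some (i + c)) := rfl

@[simp] theorem negSwap_inl_none : negSwap p (.inl none) = .inr none := rfl

@[simp] theorem negSwap_inr_none : negSwap p (.inr none) = .inl none := rfl

@[simp] theorem negSwap_inl_some (i : ZMod p) :
    negSwap p (.inl (some i)) = .inr (some (-i)) := rfl

@[simp] theorem negSwap_inr_some (i : ZMod p) :
    negSwap p (.inr (some i)) = .inl (some (-i)) := rfl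

theorem translate_add (c d : ZMod p) : translate (c + d) = translate c * translate d := by
  ext1 ((_ | i) | (_ | i)) <;> simp [add_comm c d, add_assoc]

theorem translate_zero : translate (0 : ZMod p) = 1 := by
  ext1 ((_ | i) | (_ | i)) <;> simp

theorem negSwap_mul_self : negSwap p * negSwap p = 1 := by
  ext1 ((_ | i) | (_ | i)) <;> simp

theorem negSwap_conj_translate (c : ZMod p) :
    negSwap p * translate c * (negSwap p)⁻¹ = translate (-c) := by
  rw [mul_inv_eq_iff_eq_mul]
  ext1 ((_ | i) | (_ | i)) <;> simp [add_comm]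

/-- The simultaneous cyclic shifts as a homomorphism into the permutations of the coordinates. -/
def translateHom (p : ℕ) : Multiplicative (ZMod p) →* Perm (Point p) where
  toFun c := translate c.toAdd
  map_one' := translate_zero
  map_mul' c d := translate_add c.toAdd d.toAdd

/-- The cyclic group of all simultaneous shifts. -/
def translations (p : ℕ) : Subgroup (Perm (Point p)) := (translateHom p).range

theorem translateHom_injective : Function.Injective (translateHom p) := fun c d hcd => by
  have h : translate c.toAdd (.inl (some 0)) = translate d.toAdd (.inl (some 0)) :=
    congrArg (fun σ : Perm (Point p) => σ (.inl (some 0))) hcd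
  simpa using h

theorem mem_translations {σ : Perm (Point p)} : σ ∈ translations p ↔ ∃ c, translate c = σ :=
  Iff.rfl

theorem translate_mem_translations (c : ZMod p) : translate c ∈ translations p := ⟨c, rfl⟩

theorem inv_translate (c : ZMod p) : (translate c)⁻¹ = translate (-c) :=
  (map_inv (translateHom p) (Multiplicative.ofAdd c)).symm

instance : IsMulCommutative (translations p) := Subgroup.range_isMulCommutative _

theorem card_translations : Nat.card (translations p) = p := by
  rw [translations, Nat.card_congr (MonoidHom.ofInjective translateHom_injective).symm.toEquiv]
  exact Nat.card_zmod p

theorem isPGroup_translations : IsPGroup p (translations p) :=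
  IsPGroup.of_card (n := 1) (by rw [card_translations, pow_one])

theorem mem_normalizer_translations [NeZero p] {h : Perm (Point p)} :
    h ∈ Subgroup.normalizer (translations p : Set (Perm (Point p))) ↔
      ∀ c, ∃ d, h * translate c = translate d * h := by
  simp only [← mul_inv_eq_iff_eq_mul]
  refine ⟨fun hh c => ?_, fun hh => ?_⟩
  · obtain ⟨d, hd⟩ := (Subgroup.mem_normalizer_iff.mp hh _).mp (translate_mem_translations c)
    exact ⟨d.toAdd, hd.symm⟩
  · refine Subgroup.mem_normalizer_fintype ?_
    rintro _ ⟨c, rfl⟩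
    obtain ⟨d, hd⟩ := hh c.toAdd
    exact ⟨d, hd.symm⟩

open Classical in
theorem ncard_of_translate_mem [NeZero p] {O : Set (Point p)}
    (hO : ∀ z ∈ O, ∀ c, translate c z ∈ O) :
    O.ncard = (if .inl none ∈ O then 1 else 0) + (if .inl (some 0) ∈ O then p else 0) +
      ((if .inr none ∈ O then 1 else 0) + if .inr (some 0) ∈ O then p else 0) := by
  have hinl (i : ZMod p) : .inl (some i) ∈ O ↔ .inl (some 0) ∈ O :=
    ⟨fun h => by simpa using hO _ h (-i), fun h => by simpa using hO _ h i⟩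
  have hinr (i : ZMod p) : .inr (some i) ∈ O ↔ .inr (some 0) ∈ O :=
    ⟨fun h => by simpa using hO _ h (-i), fun h => by simpa using hO _ h i⟩
  rw [Set.ncard_eq_toFinset_card', ← Set.filter_mem_univ_eq_toFinset, Finset.card_filter,
    Fintype.sum_sum_type, Fintype.sum_option, Fintype.sum_option]
  simp only [hinl, hinr, Finset.sum_const, Finset.card_univ, ZMod.card, smul_eq_mul, mul_ite,
    mul_one, mul_zero]

end Coordinates

section BorderedCode

open Matrix

variable {p : ℕ}

/-- The bordered matrix whose border is indexed by `none` and whose circulant block has first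
column `v`. -/
def borderMatrix (v : ZMod p → ZMod 2) : Matrix (Option (ZMod p)) (Option (ZMod p)) (ZMod 2) :=
  Matrix.of fun
    | none, none => 0
    | none, some _ => 1
    | some _, none => 1
    | some i, some j => v (i - j)

/-- The bordered double circulant code determined by the circulant vector `v`. -/
def code (v : ZMod p → ZMod 2) : Submodule (ZMod 2) (Point p → ZMod 2) :=
  systematicCode (borderMatrix v)

/-- The bordered double circulant code of `v` is doubly even and self-dual, and its minimum weight
exceeds four. -/
structure IsAdmissible [NeZero p] (v : ZMod p → ZMod 2) : Prop where
  isSelfDual : IsSelfDual (code v)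
  doublyEven : ∀ u ∈ code v, hammingNorm u % 4 = 0
  four_lt_hammingNorm : ∀ u ∈ code v, u ≠ 0 → 4 < hammingNorm u

variable {v : ZMod p → ZMod 2}

theorem submatrix_borderMatrix_translate (v : ZMod p → ZMod 2) (c : ZMod p) :
    (borderMatrix v).submatrix (Equiv.addRight c).optionCongr (Equiv.addRight c).optionCongr =
      borderMatrix v := by
  ext (_ | i) (_ | j) <;> simp [borderMatrix]

theorem transpose_borderMatrix_submatrix_neg (v : ZMod p → ZMod 2) :
    (borderMatrix v)ᵀ.submatrix (Equiv.neg (ZMod p)).optionCongr (Equiv.neg _).optionCongr =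
      borderMatrix v := by
  ext (_ | i) (_ | j) <;> simp [borderMatrix, neg_add_eq_sub]

variable [NeZero p]

theorem mem_code {u : Point p → ZMod 2} :
    u ∈ code v ↔ u (.inr none) = ∑ i, u (.inl (some i)) ∧
      ∀ j, u (.inr (some j)) = u (.inl none) + ∑ i, u (.inl (some i)) * v (i - j) := by
  simp only [code, mem_systematicCode, funext_iff, Option.forall, vecMul, dotProduct,
    Fintype.sum_option, borderMatrix, of_apply, Function.comp_apply, mul_zero, mul_one, zero_add]

theorem hammingNorm_point (u : Point p → ZMod 2) :
    hammingNorm u = (u (.inl none)).val + ∑ i, (u (.inl (some i))).val +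
      ((u (.inr none)).val + ∑ i, (u (.inr (some i))).val) := by
  rw [hammingNorm_eq_sum_val, Fintype.sum_sum_type, Fintype.sum_option, Fintype.sum_option]

theorem translate_mem_autGroup (v : ZMod p → ZMod 2) (c : ZMod p) :
    translate c ∈ autGroup (code v) :=
  sumCongr_mem_autGroup (submatrix_borderMatrix_translate v c)

theorem translations_le_autGroup (v : ZMod p → ZMod 2) : translations p ≤ autGroup (code v) := by
  rintro _ ⟨c, rfl⟩
  exact translate_mem_autGroup v c.toAdd

theorem IsAdmissible.negSwap_mem_autGroup (hv : IsAdmissible v) :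
    negSwap p ∈ autGroup (code v) :=
  sumComm_mem_autGroup (mul_transpose_eq_one_of_isSelfDual hv.isSelfDual)
    (transpose_borderMatrix_submatrix_neg v)

theorem exists_borderedDCC_comap_eq_code {B : Matrix (Fin (p + 1)) (Fin (p + 1)) (ZMod 2)}
    (hB : IsBorderMatrix B) : ∃ (v : ZMod p → ZMod 2) (e : Fin (p + 1) ⊕ Fin (p + 1) ≃ Point p),
      code v = (borderedDCC B).comap (LinearMap.funLeft (ZMod 2) (ZMod 2) e) := by
  obtain ⟨h00, h0, h1, _, ⟨w, rfl⟩, hw⟩ := hB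
  let f := ZMod.finEquiv p
  let e : Fin (p + 1) ≃ Option (ZMod p) := (finSuccEquiv p).trans f.toEquiv.optionCongr
  have hnone : e.symm none = 0 := finSuccEquiv_symm_none
  have hsome (i : ZMod p) : e.symm (some i) = (f.symm i).succ := finSuccEquiv_symm_some _
  refine ⟨w ∘ f.symm, e.sumCongr e, ?_⟩
  have hmatrix : borderMatrix (w ∘ f.symm) = B.submatrix e.symm e.symm := by
    ext (_ | i) (_ | j)
    · rw [submatrix_apply, hnone, h00]; rfl
    · rw [submatrix_apply, hnone, hsome, h0 _ (Fin.succ_ne_zero _)]; rfl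
    · rw [submatrix_apply, hnone, hsome, h1 _ (Fin.succ_ne_zero _)]; rfl
    · rw [submatrix_apply, hsome, hsome, hw, circulant_apply, ← map_sub]; rfl
  rw [code, hmatrix]
  exact systematicCode_submatrix e

theorem exists_isAdmissible_of_isBorderMatrix
    {B : Matrix (Fin (p + 1)) (Fin (p + 1)) (ZMod 2)} (hB : IsBorderMatrix B)
    (hsd : IsSelfDual (borderedDCC B)) (hde : ∀ x ∈ borderedDCC B, hammingNorm x % 4 = 0)
    (hmin : ∀ x ∈ borderedDCC B, x ≠ 0 → 4 < hammingNorm x) :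
    ∃ v : ZMod p → ZMod 2, IsAdmissible v ∧
      Nat.card (autGroup (code v)) = autGroupOrder (borderedDCC B) := by
  obtain ⟨v, e, hve⟩ := exists_borderedDCC_comap_eq_code hB
  refine ⟨v, ⟨hve ▸ isSelfDual_comap_funLeft hsd e, fun u hu => ?_, fun u hu hu0 => ?_⟩, ?_⟩
  · rw [hve] at hu
    rw [← hammingNorm_comp_equiv e]
    exact hde _ hu
  · rw [hve] at hu
    rw [← hammingNorm_comp_equiv e]
    refine hmin _ hu fun h0 => hu0 ?_
    rwa [← e.surjective.injective_comp_right.eq_iff]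
  · rw [hve]
    exact autGroupOrder_comap_funLeft e

end BorderedCode

section Multipliers

variable {p : ℕ} [Fact p.Prime] {v w : ZMod p → ZMod 2}

/- The involution `x ↦ -x - 2t` pairs up the terms of the correlation at `2t` apart from `x = -t`,
so that correlation is `w t`. -/
theorem eq_one_of_even_of_correlation (hp2 : p ≠ 2) (heven : ∀ t, w (-t) = w t)
    (hcorr : ∀ e, e ≠ 0 → ∑ j, w j * w (j + e) = 1) {t : ZMod p} (ht : t ≠ 0) : w t = 1 := by
  have h2 : (2 : ZMod p) ≠ 0 := Ring.two_ne_zero ((ZMod.ringChar_zmod_n p).trans_ne hp2)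
  have hsum := hcorr (2 * t) (mul_ne_zero h2 ht)
  have hpairs : ∑ x ∈ Finset.univ.erase (-t), w x * w (x + 2 * t) = 0 := by
    refine Finset.sum_involution (fun x _ => -x - 2 * t) (fun x _ => ?_) (fun x hx _ h => ?_)
      (fun x hx => ?_) fun x _ => by ring
    · rw [← heven (-x - 2 * t), ← heven (-x - 2 * t + 2 * t),
        show -(-x - 2 * t) = x + 2 * t by ring, show -(-x - 2 * t + 2 * t) = x by ring, mul_comm]
      exact CharTwo.add_self_eq_zero _
    · refine (Finset.mem_erase.mp hx).1 (mul_left_cancel₀ h2 ?_)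
      linear_combination -h
    · refine Finset.mem_erase.mpr ⟨fun h => (Finset.mem_erase.mp hx).1 ?_, Finset.mem_univ _⟩
      linear_combination -h
  rw [← Finset.add_sum_erase _ _ (Finset.mem_univ (-t)), hpairs, add_zero, heven,
    show -t + 2 * t = t by ring] at hsum
  exact (mul_eq_one.mp hsum).1

theorem pow_mul_apply_of_mul_apply {m : ZMod p} (hw : ∀ t, w (m * t) = w t) (n : ℕ) (t : ZMod p) :
    w (m ^ n * t) = w t := by
  induction n with
  | zero => rw [pow_zero, one_mul]
  | succ n ih => rw [pow_succ', mul_assoc, hw, ih]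

variable {q : ℕ} [Fact q.Prime]

theorem exists_sq_pow_eq_of_pow_eq_one (hpq : p = 2 * q + 1) {m : ZMod p} (hm0 : m ≠ 0)
    (hm1 : m ≠ 1) (hm1' : m ≠ -1) {t : ZMod p} (ht : t ^ q = 1) : ∃ n, (m ^ 2) ^ n = t := by
  have hq : NeZero q := ⟨(Fact.out : q.Prime).ne_zero⟩
  have hpow : (m ^ 2) ^ q = 1 := by
    rw [← pow_mul, show 2 * q = p - 1 by omega, ZMod.pow_card_sub_one_eq_one hm0]
  have hne : m ^ 2 ≠ 1 := fun h => (sq_eq_one_iff.mp h).elim hm1 hm1'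
  have hprim : IsPrimitiveRoot (m ^ 2) q :=
    IsPrimitiveRoot.iff_orderOf.mpr (orderOf_eq_prime hpow hne)
  obtain ⟨n, -, hn⟩ := hprim.eq_pow_of_pow_eq_one ht
  exact ⟨n, hn⟩

theorem val_add_val_neg_of_mul_apply (hpq : p = 2 * q + 1) (hq : Odd q) {m : ZMod p} (hm0 : m ≠ 0)
    (hm1 : m ≠ 1) (hm1' : m ≠ -1) (hw : ∀ t, w (m * t) = w t) {t : ZMod p} (ht : t ≠ 0) :
    (w t).val + (w (-t)).val = (w 1).val + (w (-1)).val := by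
  have key {t : ZMod p} (ht : t ^ q = 1) : w t = w 1 ∧ w (-t) = w (-1) := by
    obtain ⟨n, rfl⟩ := exists_sq_pow_eq_of_pow_eq_one hpq hm0 hm1 hm1' ht
    rw [← pow_mul]
    exact ⟨by rw [← pow_mul_apply_of_mul_apply hw (2 * n) 1, mul_one],
      by rw [← pow_mul_apply_of_mul_apply hw (2 * n) (-1), mul_neg_one]⟩
  have hsq : (t ^ q) ^ 2 = 1 := by
    rw [← pow_mul, mul_comm, show 2 * q = p - 1 by omega, ZMod.pow_card_sub_one_eq_one ht]
  rcases sq_eq_one_iff.mp hsq with h | h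
  · rw [(key h).1, (key h).2]
  · have h' : (-t) ^ q = 1 := by rw [hq.neg_pow, h, neg_neg]
    rw [(key h').1, ← neg_neg t, (key h').2, add_comm]

theorem hammingNorm_eq_of_mul_apply (hpq : p = 2 * q + 1) (hq : Odd q) {m : ZMod p} (hm0 : m ≠ 0)
    (hm1 : m ≠ 1) (hm1' : m ≠ -1) (hw : ∀ t, w (m * t) = w t) :
    hammingNorm w = (w 0).val + q * ((w 1).val + (w (-1)).val) := by
  have hneg : ∑ t ∈ Finset.univ.erase 0, (w (-t)).val = ∑ t ∈ Finset.univ.erase 0, (w t).val :=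
    Finset.sum_equiv (Equiv.neg (ZMod p)) (by simp) fun t _ => rfl
  have hdouble : 2 * ∑ t ∈ Finset.univ.erase 0, (w t).val =
      2 * (q * ((w 1).val + (w (-1)).val)) := by
    calc 2 * ∑ t ∈ Finset.univ.erase 0, (w t).val
        = ∑ t ∈ Finset.univ.erase 0, ((w t).val + (w (-t)).val) := by
          rw [Finset.sum_add_distrib, hneg, two_mul]
      _ = ∑ _ ∈ Finset.univ.erase (0 : ZMod p), ((w 1).val + (w (-1)).val) :=
          Finset.sum_congr rfl fun t ht =>
            val_add_val_neg_of_mul_apply hpq hq hm0 hm1 hm1' hw (Finset.ne_of_mem_erase ht)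
      _ = 2 * (q * ((w 1).val + (w (-1)).val)) := by
          rw [Finset.sum_const, Finset.card_erase_of_mem (Finset.mem_univ _), Finset.card_univ,
            ZMod.card, smul_eq_mul, show p - 1 = 2 * q by omega, mul_assoc]
  rw [hammingNorm_eq_sum_val, ← Finset.add_sum_erase _ _ (Finset.mem_univ 0),
    Nat.eq_of_mul_eq_mul_left two_pos hdouble]

theorem eq_one_of_mul_apply (hpq : p = 2 * q + 1) (hq : q % 4 = 3)
    (hweight : hammingNorm w % 4 = 2) (hcorr : ∀ e, e ≠ 0 → ∑ j, w j * w (j + e) = 1)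
    {m : ZMod p} (hm0 : m ≠ 0) (hm1 : m ≠ 1) (hw : ∀ t, w (m * t) = w t) {t : ZMod p}
    (ht : t ≠ 0) : w t = 1 := by
  by_cases hm1' : m = -1
  · exact eq_one_of_even_of_correlation (by omega) (fun t => by rw [← hw t, hm1', neg_one_mul])
      hcorr ht
  have hodd : Odd q := Nat.odd_iff.mpr (by omega)
  rw [hammingNorm_eq_of_mul_apply hpq hodd hm0 hm1 hm1' hw, Nat.add_mod, Nat.mul_mod, hq] at hweight
  have hlt (a : ZMod p) : (w a).val < 2 := ZMod.val_lt _
  have hval := val_add_val_neg_of_mul_apply hpq hodd hm0 hm1 hm1' hw ht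
  have h0 := hlt 0
  have h1 := hlt 1
  have h2 := hlt (-1)
  have h3 := hlt t
  have h4 := hlt (-t)
  have hone : (w t).val = (1 : ZMod 2).val := by
    rw [ZMod.val_one]
    interval_cases (w 0).val <;> interval_cases (w 1).val <;> interval_cases (w (-1)).val <;> omega
  exact ZMod.val_injective 2 hone

theorem apply_eq_apply_zero_of_add_apply {d : ZMod p} (hd : d ≠ 0) (hv : ∀ t, v (t + d) = v t)
    (t : ZMod p) : v t = v 0 := by
  have hn (n : ℕ) : v (n * d) = v 0 := by
    induction n with
    | zero => rw [Nat.cast_zero, zero_mul]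
    | succ n ih => rw [Nat.cast_succ, add_one_mul, hv, ih]
  rw [← hn (t / d).val, ZMod.natCast_zmod_val, div_mul_cancel₀ _ hd]

theorem eq_one_and_eq_zero_of_affine_apply (hpq : p = 2 * q + 1) (hq : q % 4 = 3)
    (hweight : hammingNorm v % 4 = 2) (hcorr : ∀ e, e ≠ 0 → ∑ j, v j * v (j + e) = 1)
    (hne : ¬ ∃ c, ∀ t, t ≠ c → v t = 1) {m d : ZMod p} (hm : m ≠ 0)
    (hv : ∀ t, v (m * t + d) = v t) : m = 1 ∧ d = 0 := by
  by_cases hm1 : m = 1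
  · refine ⟨hm1, by_contra fun hd => ?_⟩
    subst hm1
    simp only [one_mul] at hv
    have hconst := apply_eq_apply_zero_of_add_apply hd hv
    rcases (by decide : ∀ a : ZMod 2, a = 0 ∨ a = 1) (v 0) with h0 | h0
    · have : v = 0 := funext fun t => (hconst t).trans h0
      simp [this] at hweight
    · exact hne ⟨0, fun t _ => (hconst t).trans h0⟩
  · have h1m : 1 - m ≠ 0 := sub_ne_zero.mpr (Ne.symm hm1)
    let c := d / (1 - m)
    have hc : c * (1 - m) = d := div_mul_cancel₀ _ h1m
    let w : ZMod p → ZMod 2 := v ∘ Equiv.addRight c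
    have hw (t : ZMod p) : w (m * t) = w t := by
      change v (m * t + c) = v (t + c)
      rw [← hv (t + c), ← hc]
      congr 1
      ring
    have hwcorr (e : ZMod p) (he : e ≠ 0) : ∑ j, w j * w (j + e) = 1 := by
      rw [← hcorr e he, ← Equiv.sum_comp (Equiv.addRight c) fun j => v j * v (j + e)]
      simp only [w, Function.comp_apply, Equiv.coe_addRight, add_right_comm]
    refine absurd ⟨c, fun t ht => ?_⟩ hne
    have hwweight : hammingNorm w % 4 = 2 := by
      rw [hammingNorm_comp_equiv (Equiv.addRight c) v, hweight]
    have := eq_one_of_mul_apply hpq hq hwweight hwcorr hm hm1 hw (sub_ne_zero.mpr ht)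
    simpa [w] using this

end Multipliers

section Normalizer

open Equiv

variable {p : ℕ} {v : ZMod p → ZMod 2}

theorem IsAdmissible.hammingNorm_mod_four [NeZero p] (hv : IsAdmissible v) :
    hammingNorm v % 4 = 2 := by
  have hrow := hv.doublyEven _ (row_mem_systematicCode (borderMatrix v) (some 0))
  have hreflect : ∑ j, (v (0 - j)).val = hammingNorm v := by
    rw [hammingNorm_eq_sum_val]
    exact Equiv.sum_comp (Equiv.subLeft 0) fun j => (v j).val
  simp only [hammingNorm_point, Sum.elim_inl, Sum.elim_inr, borderMatrix, Matrix.of_apply, hreflect,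
    Option.some.injEq, apply_ite ZMod.val, ZMod.val_one, ZMod.val_zero, reduceCtorEq, if_false,
    Finset.sum_ite_eq', Finset.mem_univ, if_true] at hrow
  omega

theorem IsAdmissible.sum_mul_add [NeZero p] (hv : IsAdmissible v) {e : ZMod p} (he : e ≠ 0) :
    ∑ j, v j * v (j + e) = 1 := by
  have hentry := congrFun₂ (mul_transpose_eq_one_of_isSelfDual hv.isSelfDual) (some 0) (some e)
  rw [Matrix.mul_apply, Fintype.sum_option, Matrix.one_apply_ne (by simpa using he.symm)] at hentry
  simp only [borderMatrix, Matrix.transpose_apply, Matrix.of_apply, mul_one] at hentry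
  rw [← Equiv.sum_comp (Equiv.subLeft 0)]
  simpa only [Equiv.subLeft_apply, zero_sub, neg_add_eq_sub] using
    (CharTwo.add_eq_zero.mp hentry).symm

theorem IsAdmissible.not_exists_forall_ne [Fact (1 < p)] [NeZero p] (hv : IsAdmissible v) :
    ¬ ∃ c, ∀ t, t ≠ c → v t = 1 := by
  rintro ⟨c, hc⟩
  have hrow (i : ZMod p) := row_mem_systematicCode (borderMatrix v) (some i)
  have hlt := hv.four_lt_hammingNorm _ (Submodule.add_mem _ (hrow 0) (hrow 1)) fun h => by
    simpa using congrFun h (.inl (some 0))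
  refine hlt.not_ge ((hammingNorm_le_card_of_support_subset
    {.inl (some 0), .inl (some 1), .inr (some (-c)), .inr (some (1 - c))} ?_).trans
    Finset.card_le_four)
  rintro ((_ | j) | (_ | j)) hj
  · simp at hj
  · simp only [Pi.add_apply, Sum.elim_inl, Option.some.injEq] at hj
    simp only [Finset.mem_insert, Finset.mem_singleton, Sum.inl.injEq, Option.some.injEq]
    by_contra! hne
    simp [hne] at hj
  · simp [borderMatrix, CharTwo.add_self_eq_zero] at hj
  · simp only [Pi.add_apply, Sum.elim_inr, borderMatrix, Matrix.of_apply] at hj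
    simp only [Finset.mem_insert, Finset.mem_singleton, Sum.inr.injEq, Option.some.injEq,
      reduceCtorEq, false_or]
    by_contra! hne
    rw [hc (0 - j) fun h => hne.1 (by linear_combination -h),
      hc (1 - j) fun h => hne.2 (by linear_combination -h)] at hj
    exact hj (CharTwo.add_self_eq_zero 1)

theorem IsAdmissible.eq_one_and_eq_of_apply [Fact p.Prime] {q : ℕ} [Fact q.Prime]
    (hpq : p = 2 * q + 1) (hq : q % 4 = 3) (hv : IsAdmissible v) {h : Perm (Point p)}
    (hh : h ∈ autGroup (code v)) (hfix : h (.inl none) = .inl none) {m a b : ZMod p} (hm : m ≠ 0)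
    (hinl : ∀ i, h (.inl (some i)) = .inl (some (m * i + a)))
    (hinr : ∀ i, h (.inr (some i)) = .inr (some (m * i + b))) : m = 1 ∧ a = b := by
  have hrow (i : ZMod p) := row_mem_systematicCode (borderMatrix v) (some i)
  have hvt (t : ZMod p) : v (m * t + (a - b)) = v t := by
    have hsum := Submodule.add_mem _ ((comp_mem_iff_of_mem_autGroup hh _).mpr (hrow (m * t + a)))
      (hrow t)
    have hleft (i : ZMod p) : m * i + a = m * t + a ↔ i = t := by
      rw [add_left_inj, mul_right_inj' hm]
    have h0 := (mem_code.mp hsum).2 0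
    simp only [Pi.add_apply, Function.comp_apply, hfix, hinl, hinr, Sum.elim_inl, Sum.elim_inr,
      borderMatrix, Matrix.of_apply, Option.some.injEq, reduceCtorEq, if_false, hleft,
      CharTwo.add_self_eq_zero, zero_mul, Finset.sum_const_zero, mul_zero, zero_add,
      sub_zero] at h0
    rw [← CharTwo.add_eq_zero.mp h0, add_sub_assoc]
  have := eq_one_and_eq_zero_of_affine_apply hpq hq hv.hammingNorm_mod_four
    (fun e he => hv.sum_mul_add he) hv.not_exists_forall_ne hm hvt
  exact ⟨this.1, sub_eq_zero.mp this.2⟩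

theorem IsAdmissible.not_swap_of_apply_none [NeZero p] (hp : Odd p) (hv : IsAdmissible v)
    {h : Perm (Point p)} (hh : h ∈ autGroup (code v)) (hinl : h (.inl none) = .inl none)
    (hinr : h (.inr none) = .inr none) :
    ¬ ((∀ i, ∃ j, h (.inl (some i)) = .inr (some j)) ∧
      ∀ i, ∃ j, h (.inr (some i)) = .inl (some j)) := by
  rintro ⟨hx, hy⟩
  choose f hf using hx
  choose g hg using hy
  have hrow := row_mem_systematicCode (borderMatrix v) none
  have hweight := hv.doublyEven _
    (Submodule.add_mem _ ((comp_mem_iff_of_mem_autGroup hh _).mpr hrow) hrow)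
  simp only [hammingNorm_point, Pi.add_apply, Function.comp_apply, hinl, hinr, hf, hg,
    Sum.elim_inl, Sum.elim_inr, borderMatrix, Matrix.of_apply, reduceCtorEq, if_false, if_true,
    CharTwo.add_self_eq_zero, add_zero, zero_add, ZMod.val_zero, ZMod.val_one, Finset.sum_const,
    Finset.card_univ, ZMod.card, smul_eq_mul, mul_one] at hweight
  have := Nat.odd_iff.mp hp
  omega

theorem exists_apply_translate_of_mem_normalizer [Fact p.Prime] {h : Perm (Point p)}
    (hh : h ∈ Subgroup.normalizer (translations p : Set (Perm (Point p)))) :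
    ∃ m ≠ 0, ∀ c z, h (translate c z) = translate (m * c) (h z) := by
  obtain ⟨m, hm⟩ := mem_normalizer_translations.mp hh 1
  have hnat (n : ℕ) : h * translate (n : ZMod p) = translate (m * (n : ZMod p)) * h := by
    induction n with
    | zero => rw [Nat.cast_zero, mul_zero, translate_zero, mul_one, one_mul]
    | succ n ih =>
      rw [Nat.cast_succ, translate_add, ← mul_assoc, ih, mul_assoc, hm, ← mul_assoc,
        ← translate_add, mul_add_one]
  refine ⟨m, ?_, fun c z => ?_⟩
  · rintro rfl
    rw [translate_zero, one_mul, mul_eq_left] at hm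
    simpa using congrArg (fun σ : Perm (Point p) => σ (.inl (some 0))) hm
  · have := hnat c.val
    rw [ZMod.natCast_zmod_val] at this
    exact congrArg (fun σ : Perm (Point p) => σ z) this

theorem apply_eq_inl_none_or_eq_inr_none_of_mem_normalizer [Fact p.Prime] {h : Perm (Point p)}
    (hh : h ∈ Subgroup.normalizer (translations p : Set (Perm (Point p)))) {z : Point p}
    (hz : translate 1 z = z) : h z = .inl none ∨ h z = .inr none := by
  obtain ⟨m, hm, htr⟩ := exists_apply_translate_of_mem_normalizer hh
  have hinv := htr 1 z
  rw [hz, mul_one] at hinv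
  rcases hhz : h z with (_ | i) | (_ | i)
  · exact .inl rfl
  · simp [hhz, hm] at hinv
  · exact .inr rfl
  · simp [hhz, hm] at hinv

theorem IsAdmissible.mem_translations_of_mem_normalizer [Fact p.Prime] {q : ℕ} [Fact q.Prime]
    (hpq : p = 2 * q + 1) (hq : q % 4 = 3) (hv : IsAdmissible v) {h : Perm (Point p)}
    (hh : h ∈ autGroup (code v)) (hfix : h (.inl none) = .inl none)
    (hnorm : h ∈ Subgroup.normalizer (translations p : Set (Perm (Point p)))) :
    h ∈ translations p := by
  obtain ⟨m, hm, htr⟩ := exists_apply_translate_of_mem_normalizer hnorm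
  have hfix' : h (.inr none) = .inr none :=
    (apply_eq_inl_none_or_eq_inr_none_of_mem_normalizer hnorm rfl).resolve_left fun h0 =>
      absurd (h.injective (h0.trans hfix.symm)) (by simp)
  have hx (i : ZMod p) : h (.inl (some i)) = translate (m * i) (h (.inl (some 0))) := by
    rw [← htr, translate_inl_some, zero_add]
  have hy (i : ZMod p) : h (.inr (some i)) = translate (m * i) (h (.inr (some 0))) := by
    rw [← htr, translate_inr_some, zero_add]
  have hinj (i : ZMod p) : h (.inl (some i)) ≠ h (.inr (some 0)) := h.injective.ne (by simp)
  rcases hx0 : h (.inl (some 0)) with (_ | a) | (_ | a)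
  · exact absurd (h.injective (hx0.trans hfix.symm)) (by simp)
  · rcases hy0 : h (.inr (some 0)) with (_ | b) | (_ | b)
    · exact absurd (h.injective (hy0.trans hfix.symm)) (by simp)
    · exact absurd ((hx _).trans (by simp [hx0, hy0, mul_div_cancel₀ _ hm]))
        (hinj ((b - a) / m))
    · exact absurd (h.injective (hy0.trans hfix'.symm)) (by simp)
    · simp only [hx0, hy0, translate_inl_some, translate_inr_some, add_comm a, add_comm b] at hx hy
      obtain ⟨rfl, rfl⟩ := hv.eq_one_and_eq_of_apply hpq hq hh hfix hm hx hy
      refine mem_translations.mpr ⟨a, ?_⟩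
      ext1 ((_ | i) | (_ | i)) <;> simp [hfix, hfix', hx, hy]
  · exact absurd (h.injective (hx0.trans hfix'.symm)) (by simp)
  · rcases hy0 : h (.inr (some 0)) with (_ | b) | (_ | b)
    · exact absurd (h.injective (hy0.trans hfix.symm)) (by simp)
    · refine absurd ⟨fun i => ?_, fun i => ?_⟩
        (hv.not_swap_of_apply_none ⟨q, hpq⟩ hh hfix hfix')
      · rw [hx, hx0]; exact ⟨_, rfl⟩
      · rw [hy, hy0]; exact ⟨_, rfl⟩
    · exact absurd (h.injective (hy0.trans hfix'.symm)) (by simp)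
    · exact absurd ((hx _).trans (by simp [hx0, hy0, mul_div_cancel₀ _ hm]))
        (hinj ((b - a) / m))

end Normalizer

section SwapPairs

open Equiv

variable {p : ℕ}

/-- The involution that exchanges the `i`-th coordinate of the first half with the `(i + c)`-th
coordinate of the second half whenever `T i` is nonzero. -/
def swapPairs (c : ZMod p) (T : ZMod p → ZMod 2) : Perm (Point p) :=
  Function.Involutive.toPerm
    (fun
      | .inl none => .inl none
      | .inr none => .inr none
      | .inl (some i) => if T i = 0 then .inl (some i) else .inr (some (i + c))
      | .inr (some j) => if T (j - c) = 0 then .inr (some j) else .inl (some (j - c)))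
    (by
      rintro ((_ | i) | (_ | i))
      · rfl
      · by_cases h : T i = 0 <;> simp [h]
      · rfl
      · by_cases h : T (i - c) = 0 <;> simp [h])

@[simp] theorem swapPairs_inl_none (c : ZMod p) (T : ZMod p → ZMod 2) :
    swapPairs c T (.inl none) = .inl none := rfl

@[simp] theorem swapPairs_inr_none (c : ZMod p) (T : ZMod p → ZMod 2) :
    swapPairs c T (.inr none) = .inr none := rfl

@[simp] theorem swapPairs_inl_some (c : ZMod p) (T : ZMod p → ZMod 2) (i : ZMod p) :
    swapPairs c T (.inl (some i)) = if T i = 0 then .inl (some i) else .inr (some (i + c)) := rfl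

@[simp] theorem swapPairs_inr_some (c : ZMod p) (T : ZMod p → ZMod 2) (j : ZMod p) :
    swapPairs c T (.inr (some j)) =
      if T (j - c) = 0 then .inr (some j) else .inl (some (j - c)) := rfl

theorem eq_swapPairs_of_apply {k : Perm (Point p)} {c : ZMod p} (hinl : k (.inl none) = .inl none)
    (hinr : k (.inr none) = .inr none)
    (hk : ∀ i, (k (.inl (some i)) = .inl (some i) ∧ k (.inr (some (i + c))) = .inr (some (i + c))) ∨
      (k (.inl (some i)) = .inr (some (i + c)) ∧ k (.inr (some (i + c))) = .inl (some i))) :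
    ∃ T, k = swapPairs c T := by
  classical
  refine ⟨fun i => if k (.inl (some i)) = .inl (some i) then 0 else 1, ?_⟩
  ext1 ((_ | i) | (_ | j))
  · exact hinl
  · rcases hk i with h | h <;> simp [h]
  · exact hinr
  · rcases hk (j - c) with h | h <;> rw [sub_add_cancel] at h <;> simp [h]

theorem swapPairs_zero (c : ZMod p) : swapPairs c 0 = 1 := by
  ext1 ((_ | i) | (_ | i)) <;> simp

theorem swapPairs_add (c : ZMod p) (T U : ZMod p → ZMod 2) :
    swapPairs c (T + U) = swapPairs c T * swapPairs c U := by
  have h2 : ∀ a : ZMod 2, a = 0 ∨ a = 1 := by decide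
  ext1 ((_ | i) | (_ | i))
  · rfl
  · rcases h2 (T i) with hT | hT <;> rcases h2 (U i) with hU | hU <;>
      simp [hT, hU, CharTwo.add_self_eq_zero]
  · rfl
  · rcases h2 (T (i - c)) with hT | hT <;> rcases h2 (U (i - c)) with hU | hU <;>
      simp [hT, hU, CharTwo.add_self_eq_zero]

theorem translate_mul_swapPairs (c d : ZMod p) (T : ZMod p → ZMod 2) :
    translate d * swapPairs c T = swapPairs c (fun j => T (j - d)) * translate d := by
  ext1 ((_ | i) | (_ | i))
  · rfl
  · by_cases h : T i = 0 <;> simp [h, add_right_comm]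
  · rfl
  · by_cases h : T (i - c) = 0 <;> simp [h, add_sub_right_comm]

end SwapPairs

section Orbits

open Equiv MulAction

variable {p : ℕ} {K : Subgroup (Perm (Point p))}

theorem translate_mem_orbit (hK : translations p ≤ Subgroup.normalizer (K : Set (Perm (Point p))))
    (c : ZMod p) {y z : Point p} (h : y ∈ orbit K z) :
    translate c y ∈ orbit K (translate c z) :=
  smul_mem_orbit_smul_of_mem_normalizer (hK (translate_mem_translations c)) h

theorem eq_of_mem_orbit_of_forall_apply_eq {y z : Point p} (hz : ∀ k ∈ K, k z = z)
    (h : z ∈ orbit K y) : y = z := by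
  obtain ⟨k, hk⟩ := h
  exact k.1.injective ((show k.1 y = z from hk).trans (hz k k.2).symm)

variable [Fact p.Prime]

theorem translate_mem_of_translate_mem {O : Set (Point p)} {c : ZMod p} (hc : c ≠ 0)
    (hO : ∀ z ∈ O, translate c z ∈ O) : ∀ z ∈ O, ∀ d, translate d z ∈ O := by
  have hmul (n : ℕ) : ∀ z ∈ O, translate ((n : ZMod p) * c) z ∈ O := by
    induction n with
    | zero => simp [translate_zero]
    | succ n ih =>
      intro z hz
      rw [Nat.cast_succ, add_one_mul, translate_add]
      exact ih _ (hO z hz)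
  intro z hz d
  simpa [div_mul_cancel₀ d hc] using hmul (d / c).val z hz

theorem eq_zero_of_translate_mem_orbit
    (hK : translations p ≤ Subgroup.normalizer (K : Set (Perm (Point p))))
    (hpK : ¬ p ∣ Nat.card K) (hinl : ∀ k ∈ K, k (.inl none) = .inl none)
    (hinr : ∀ k ∈ K, k (.inr none) = .inr none) {z : Point p} (hzl : z ≠ .inl none)
    (hzr : z ≠ .inr none) {c : ZMod p} (h : translate c z ∈ orbit K z) : c = 0 := by
  by_contra hc
  have hcard := ncard_of_translate_mem (translate_mem_of_translate_mem hc fun y hy =>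
    orbit_eq_iff.mpr h ▸ translate_mem_orbit hK c hy)
  rw [if_neg fun h => hzl (eq_of_mem_orbit_of_forall_apply_eq hinl h),
    if_neg fun h => hzr (eq_of_mem_orbit_of_forall_apply_eq hinr h), zero_add, zero_add] at hcard
  refine hpK (dvd_trans ?_ (index_stabilizer K z ▸ (stabilizer K z).index_dvd_card))
  rw [hcard]
  exact dvd_add (by split_ifs <;> simp) (by split_ifs <;> simp)

theorem exists_eq_or_eq_of_mem_orbit
    (hK : translations p ≤ Subgroup.normalizer (K : Set (Perm (Point p))))
    (hpK : ¬ p ∣ Nat.card K) (hinl : ∀ k ∈ K, k (.inl none) = .inl none)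
    (hinr : ∀ k ∈ K, k (.inr none) = .inr none) :
    ∃ c, ∀ i y, y ∈ orbit K (.inl (some i) : Point p) ∨ y ∈ orbit K (.inr (some (i + c))) →
      y = .inl (some i) ∨ y = .inr (some (i + c)) := by
  have hx {i j : ZMod p} (h : .inl (some j) ∈ orbit K (.inl (some i) : Point p)) : j = i :=
    sub_eq_zero.mp <| eq_zero_of_translate_mem_orbit hK hpK hinl hinr
      (z := .inl (some i)) (by simp) (by simp) (by simpa using h)
  have hy {i j : ZMod p} (h : .inr (some j) ∈ orbit K (.inr (some i) : Point p)) : j = i :=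
    sub_eq_zero.mp <| eq_zero_of_translate_mem_orbit hK hpK hinl hinr
      (z := .inr (some i)) (by simp) (by simp) (by simpa using h)
  have hl {i : ZMod p} {y} (h : y ∈ orbit K (.inl (some i) : Point p)) :
      y = .inl (some i) ∨ ∃ j, y = .inr (some j) := by
    rcases y with (_ | j) | (_ | j)
    · exact absurd (eq_of_mem_orbit_of_forall_apply_eq hinl h) (by simp)
    · exact .inl (by rw [hx h])
    · exact absurd (eq_of_mem_orbit_of_forall_apply_eq hinr h) (by simp)
    · exact .inr ⟨j, rfl⟩
  have hr {i : ZMod p} {y} (h : y ∈ orbit K (.inr (some i) : Point p)) :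
      (∃ j, y = .inl (some j)) ∨ y = .inr (some i) := by
    rcases y with (_ | j) | (_ | j)
    · exact absurd (eq_of_mem_orbit_of_forall_apply_eq hinl h) (by simp)
    · exact .inl ⟨j, rfl⟩
    · exact absurd (eq_of_mem_orbit_of_forall_apply_eq hinr h) (by simp)
    · exact .inr (by rw [hy h])
  by_cases hc : ∃ c, .inr (some c) ∈ orbit K (.inl (some 0) : Point p)
  · obtain ⟨c, hc⟩ := hc
    refine ⟨c, fun i y hy => ?_⟩
    have horbit : orbit K (.inr (some (i + c)) : Point p) = orbit K (.inl (some i)) :=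
      orbit_eq_iff.mpr (by simpa [add_comm] using translate_mem_orbit hK i hc)
    rw [horbit, or_self] at hy
    refine (hl hy).imp_right fun ⟨j, hj⟩ => (hr (horbit ▸ hy)).resolve_left (by simp [hj])
  · have hne (i j : ZMod p) : .inr (some j) ∉ orbit K (.inl (some i) : Point p) := fun h =>
      hc ⟨j - i, by simpa [sub_eq_add_neg] using translate_mem_orbit hK (-i) h⟩
    refine ⟨0, fun i y hy => ?_⟩
    rw [add_zero] at hy ⊢
    refine hy.imp (fun h => (hl h).resolve_right ?_) fun h => (hr h).resolve_left ?_
    · rintro ⟨j, rfl⟩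
      exact hne i j h
    · rintro ⟨j, rfl⟩
      exact hne j i (mem_orbit_symm.mp h)

theorem exists_forall_eq_swapPairs
    (hK : translations p ≤ Subgroup.normalizer (K : Set (Perm (Point p))))
    (hpK : ¬ p ∣ Nat.card K) (hinl : ∀ k ∈ K, k (.inl none) = .inl none)
    (hinr : ∀ k ∈ K, k (.inr none) = .inr none) : ∃ c, ∀ k ∈ K, ∃ T, k = swapPairs c T := by
  obtain ⟨c, hc⟩ := exists_eq_or_eq_of_mem_orbit hK hpK hinl hinr
  refine ⟨c, fun k hk => eq_swapPairs_of_apply (hinl k hk) (hinr k hk) fun i => ?_⟩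
  have hne : k (.inl (some i)) ≠ k (.inr (some (i + c))) := k.injective.ne (by simp)
  rcases hc i _ (.inl ⟨⟨k, hk⟩, rfl⟩) with h | h <;>
    rcases hc i _ (.inr ⟨⟨k, hk⟩, rfl⟩) with h' | h'
  · exact absurd (h.trans h'.symm) hne
  · exact .inl ⟨h, h'⟩
  · exact .inr ⟨h, h'⟩
  · exact absurd (h.trans h'.symm) hne

theorem apply_inr_none_of_isPGroup {r : ℕ} [Fact r.Prime] (hK : IsPGroup r K)
    (hp : ¬ IsPrimePow (p + 1)) (hp' : ¬ IsPrimePow (2 * p + 1))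
    (hnorm : translations p ≤ Subgroup.normalizer (K : Set (Perm (Point p))))
    (hinl : ∀ k ∈ K, k (.inl none) = .inl none) {k : Perm (Point p)} (hk : k ∈ K) :
    k (.inr none) = .inr none := by
  obtain ⟨e, he⟩ := hK.card_orbit (.inr none : Point p)
  have hcard := ncard_of_translate_mem (O := orbit K (.inr none : Point p)) fun z hz c =>
    translate_mem_orbit hnorm c hz
  rw [if_pos (mem_orbit_self _), if_neg fun h => by
    simpa using eq_of_mem_orbit_of_forall_apply_eq hinl h, ← Nat.card_coe_set_eq, he] at hcard
  have he0 : e = 0 := by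
    by_contra he0
    have hpow : IsPrimePow (r ^ e) := (Fact.out : r.Prime).isPrimePow.pow he0
    rw [hcard] at hpow
    split_ifs at hpow
    · exact hp' (by convert hpow using 1; ring)
    · exact hp (by convert hpow using 1; ring)
    · exact hp (by convert hpow using 1; ring)
    · exact not_isPrimePow_one hpow
  rw [he0, pow_zero, Nat.card_coe_set_eq, Set.ncard_eq_one] at he
  obtain ⟨y, hy⟩ := he
  have hmem {z : Point p} (hz : z ∈ orbit K (.inr none : Point p)) : z = y := by simpa [hy] using hz
  exact (hmem ⟨⟨k, hk⟩, rfl⟩).trans (hmem (mem_orbit_self _)).symm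

end Orbits

section InvariantSubgroups

/- A nonzero element of least weight has two points in its support; multiplying it by a function in
`D` that vanishes at exactly one of them would lower its weight. -/
theorem eq_bot_of_mul_mem {ι : Type*} [Fintype ι] {W : AddSubgroup (ι → ZMod 2)}
    {D : Set (ι → ZMod 2)} (hmul : ∀ T ∈ W, ∀ φ ∈ D, T * φ ∈ W)
    (hsep : ∀ i j, i ≠ j → ∃ φ ∈ D, φ i ≠ φ j)
    (hweight : ∀ T ∈ W, T ≠ 0 → 1 < hammingNorm T) : W = ⊥ := by
  rw [AddSubgroup.eq_bot_iff_forall]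
  intro T hT
  induction hn : hammingNorm T using Nat.strong_induction_on generalizing T with | _ n ih
  by_contra hT0
  have hlt {φ : ι → ZMod 2} (hφ : φ ∈ D) {i j : ι} (hi : T i ≠ 0) (hj : T j ≠ 0)
      (hφi : φ i ≠ 0) (hφj : φ j = 0) : False := by
    refine mul_ne_zero hi hφi (congrFun (ih _ ?_ _ (hmul T hT φ hφ) rfl) i)
    rw [← hn]
    refine Finset.card_lt_card (Finset.ssubset_iff_of_subset (fun k hk => ?_) |>.mpr ⟨j, ?_, ?_⟩)
    · exact Finset.mem_filter.mpr
        ⟨Finset.mem_univ _, left_ne_zero_of_mul (Finset.mem_filter.mp hk).2⟩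
    · simpa using hj
    · simp [hφj]
  obtain ⟨i, hi, j, hj, hij⟩ := Finset.one_lt_card.mp (hweight T hT hT0)
  obtain ⟨φ, hφ, hne⟩ := hsep i j hij
  rw [Finset.mem_filter_univ] at hi hj
  by_cases hφi : φ i = 0
  · exact hlt hφ hj hi (fun hφj => hne (hφi.trans hφj.symm)) hφi
  · have hφj : φ j = 0 := by
      generalize φ i = a at *
      generalize φ j = b at *
      revert a b; decide
    exact hlt hφ hi hj hφi hφj

variable {p : ℕ} {W V : AddSubgroup (ZMod p → ZMod 2)}

theorem card_modEq_one_of_sub_mem [Fact p.Prime] (hW : ∀ T ∈ W, ∀ d, (fun j => T (j - d)) ∈ W)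
    (h1 : 1 ∉ W) : Nat.card W ≡ 1 [MOD p] := by
  let _ : MulAction (Multiplicative (ZMod p)) W :=
    { smul := fun d T => ⟨fun j => T.1 (j - d.toAdd), hW T.1 T.2 d.toAdd⟩
      one_smul := fun T => Subtype.ext (funext fun j => congrArg T.1 (sub_zero j))
      mul_smul := fun c d T =>
        Subtype.ext (funext fun j => congrArg T.1 (sub_add_eq_sub_sub _ _ _)) }
  have hgroup : IsPGroup p (Multiplicative (ZMod p)) :=
    IsPGroup.of_card (n := 1) ((Nat.card_zmod p).trans (pow_one p).symm)
  have hfixed : MulAction.fixedPoints (Multiplicative (ZMod p)) W = {0} := by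
    refine Set.eq_singleton_iff_unique_mem.mpr ⟨fun d => rfl, fun T hT => ?_⟩
    have hconst (j : ZMod p) : T.1 j = T.1 0 := by
      have := congrFun (congrArg Subtype.val (hT (Multiplicative.ofAdd j))) j
      rw [← this]
      exact congrArg T.1 (sub_self j)
    rcases (by decide : ∀ a : ZMod 2, a = 0 ∨ a = 1) (T.1 0) with h0 | h0
    · exact Subtype.ext (funext fun j => (hconst j).trans h0)
    · exact absurd T.2 ((funext fun j => (hconst j).trans h0 : T.1 = 1) ▸ h1)
  have := hgroup.card_modEq_card_fixedPoints W
  rwa [hfixed, Nat.card_coe_set_eq, Set.ncard_singleton] at this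

theorem dvd_of_two_pow_eq_one {q a : ℕ} [Fact p.Prime] (hq : q.Prime) (hpq : p = 2 * q + 1)
    (ha : (2 : ZMod p) ^ a = 1) : q ∣ a := by
  by_contra hqa
  have hp4 : 4 < p := by have := hq.two_le; omega
  have h2 : (2 : ZMod p) ≠ 0 := Ring.two_ne_zero (by rw [ZMod.ringChar_zmod_n]; omega)
  have hpow : (2 : ZMod p) ^ (2 * q) = 1 := by
    rw [show 2 * q = p - 1 by omega, ZMod.pow_card_sub_one_eq_one h2]
  have hgcd : Nat.gcd a (2 * q) ∣ 2 :=
    (((Nat.Prime.coprime_iff_not_dvd hq).mpr hqa).symm.coprime_dvd_left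
      (Nat.gcd_dvd_left a (2 * q))).dvd_of_dvd_mul_right (Nat.gcd_dvd_right a (2 * q))
  have h4 : ((4 : ℕ) : ZMod p) = ((1 : ℕ) : ZMod p) := by
    obtain ⟨k, hk⟩ := hgcd
    have := pow_gcd_eq_one.mpr ⟨ha, hpow⟩
    calc ((4 : ℕ) : ZMod p) = 2 ^ 2 := by norm_num
      _ = (2 ^ Nat.gcd a (2 * q)) ^ k := by rw [← pow_mul, ← hk]
      _ = ((1 : ℕ) : ZMod p) := by rw [this, one_pow, Nat.cast_one]
  rw [ZMod.natCast_eq_natCast_iff', Nat.mod_eq_of_lt hp4, Nat.mod_eq_of_lt (by omega)] at h4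
  omega

theorem exists_card_eq_two_pow_mul [Fact p.Prime] {q : ℕ} (hq : q.Prime) (hpq : p = 2 * q + 1)
    (hW : ∀ T ∈ W, ∀ d, (fun j => T (j - d)) ∈ W) (h1 : 1 ∉ W) :
    ∃ k, Nat.card W = 2 ^ (q * k) := by
  have hdvd : Nat.card W ∣ 2 ^ p := by
    have := AddSubgroup.card_addSubgroup_dvd_card W
    rwa [Nat.card_fun, Nat.card_zmod, Nat.card_zmod] at this
  obtain ⟨a, -, ha⟩ := (Nat.dvd_prime_pow Nat.prime_two).mp hdvd
  have hmod := (ZMod.natCast_eq_natCast_iff _ _ _).mpr (card_modEq_one_of_sub_mem hW h1)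
  rw [ha, Nat.cast_pow, Nat.cast_one] at hmod
  obtain ⟨k, rfl⟩ := dvd_of_two_pow_eq_one hq hpq (by exact_mod_cast hmod)
  exact ⟨k, ha⟩

/- Both orders are powers of `2 ^ q` that divide `2 ^ (2 * q + 1)`, and `W` cannot have order
`2 ^ (2 * q)`, as its index would be two. -/
theorem eq_of_le_of_sub_mem [Fact p.Prime] {q : ℕ} (hq : q.Prime) (hpq : p = 2 * q + 1)
    (hV : ∀ T ∈ V, ∀ d, (fun j => T (j - d)) ∈ V) (hW : ∀ T ∈ W, ∀ d, (fun j => T (j - d)) ∈ W)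
    (h1 : 1 ∉ W) (hindex : W.index ≠ 2) (hVW : V ≤ W) (hV0 : V ≠ ⊥) : V = W := by
  obtain ⟨k, hk⟩ := exists_card_eq_two_pow_mul hq hpq hV fun h => h1 (hVW h)
  obtain ⟨l, hl⟩ := exists_card_eq_two_pow_mul hq hpq hW h1
  have hcard : 2 ^ (q * l) * W.index = 2 ^ p := by
    rw [← hl, AddSubgroup.card_mul_index, Nat.card_fun, Nat.card_zmod, Nat.card_zmod]
  have hk0 : k ≠ 0 := fun h => hV0 (AddSubgroup.card_eq_one.mp (by rw [hk, h, mul_zero, pow_zero]))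
  have hl2 : l < 2 := by
    by_contra! hl2
    have hle : q * l ≤ 2 * q + 1 :=
      hpq ▸ (Nat.pow_dvd_pow_iff_le_right (by decide)).mp (Dvd.intro _ hcard)
    obtain rfl : l = 2 := by
      have := hq.two_le
      by_contra hl
      have : q * 3 ≤ q * l := Nat.mul_le_mul_left q (by omega)
      omega
    refine hindex (Nat.eq_of_mul_eq_mul_left (Nat.two_pow_pos (q * 2)) ?_)
    rw [hcard, hpq, pow_succ, mul_comm q]
  refine AddSubgroup.eq_of_le_of_card_ge hVW ?_
  rw [hk, hl]
  exact Nat.pow_le_pow_right two_pos (Nat.mul_le_mul_left q (by omega))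

end InvariantSubgroups

section SwapGroup

open Equiv

variable {p : ℕ}

/-- `swapPairs c` as a homomorphism from the vectors under addition. -/
def swapPairsHom (c : ZMod p) : (ZMod p → ZMod 2) →+ Additive (Perm (Point p)) where
  toFun T := .ofMul (swapPairs c T)
  map_zero' := swapPairs_zero c
  map_add' := swapPairs_add c

/-- The vector with entry `T i` at both coordinates of the `i`-th pair exchanged by `swapPairs c`,
and zero at the border. -/
def double (c : ZMod p) : (ZMod p → ZMod 2) →ₗ[ZMod 2] (Point p → ZMod 2) where
  toFun T := Sum.elim (·.elim 0 T) (·.elim 0 fun j => T (j - c))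
  map_add' T U := by ext ((_ | i) | (_ | i)) <;> simp
  map_smul' a T := by ext ((_ | i) | (_ | i)) <;> simp

@[simp] theorem double_inl_none (c : ZMod p) (T : ZMod p → ZMod 2) :
    double c T (.inl none) = 0 := rfl

@[simp] theorem double_inr_none (c : ZMod p) (T : ZMod p → ZMod 2) :
    double c T (.inr none) = 0 := rfl

@[simp] theorem double_inl_some (c : ZMod p) (T : ZMod p → ZMod 2) (i : ZMod p) :
    double c T (.inl (some i)) = T i := rfl

@[simp] theorem double_inr_some (c : ZMod p) (T : ZMod p → ZMod 2) (j : ZMod p) :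
    double c T (.inr (some j)) = T (j - c) := rfl

/-- The vector whose `i`-th entry is the sum of the entries of `u` over the `i`-th pair exchanged by
`swapPairs c`. -/
def pairSum (c : ZMod p) (u : Point p → ZMod 2) : ZMod p → ZMod 2 :=
  fun i => u (.inl (some i)) + u (.inr (some (i + c)))

theorem double_mul_pairSum (c : ZMod p) (T : ZMod p → ZMod 2) (u : Point p → ZMod 2) :
    double c (T * pairSum c u) = u + u ∘ swapPairs c T := by
  have h2 : ∀ a : ZMod 2, a = 0 ∨ a = 1 := by decide
  ext ((_ | i) | (_ | i))
  · simp [CharTwo.add_self_eq_zero]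
  · rcases h2 (T i) with hT | hT <;> simp [hT, pairSum, CharTwo.add_self_eq_zero]
  · simp [CharTwo.add_self_eq_zero]
  · rcases h2 (T (i - c)) with hT | hT <;> simp [hT, pairSum, CharTwo.add_self_eq_zero, add_comm]

theorem double_comp_translate (c d : ZMod p) (T : ZMod p → ZMod 2) :
    double c T ∘ translate (-d) = double c fun j => T (j - d) := by
  ext ((_ | i) | (_ | i)) <;> simp [sub_eq_add_neg, add_right_comm]

/-- The vectors `T` such that `swapPairs c T` is an automorphism of the code of `v`. -/
def swapGroup (v : ZMod p → ZMod 2) (c : ZMod p) : AddSubgroup (ZMod p → ZMod 2) :=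
  (autGroup (code v)).toAddSubgroup.comap (swapPairsHom c)

/-- The vectors `T` such that `double c T` is a codeword of the code of `v`. -/
def pairCode (v : ZMod p → ZMod 2) (c : ZMod p) : AddSubgroup (ZMod p → ZMod 2) :=
  ((code v).comap (double c)).toAddSubgroup

variable {v T : ZMod p → ZMod 2} {c : ZMod p}

theorem mem_swapGroup : T ∈ swapGroup v c ↔ swapPairs c T ∈ autGroup (code v) := Iff.rfl

theorem mem_pairCode : T ∈ pairCode v c ↔ double c T ∈ code v := Iff.rfl

theorem mul_pairSum_mem_pairCode (hT : T ∈ swapGroup v c) {u : Point p → ZMod 2}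
    (hu : u ∈ code v) : T * pairSum c u ∈ pairCode v c := by
  rw [mem_pairCode, double_mul_pairSum]
  exact add_mem hu ((comp_mem_iff_of_mem_autGroup hT u).mpr hu)

theorem swapGroup_le_pairCode (v : ZMod p → ZMod 2) (c : ZMod p) :
    swapGroup v c ≤ pairCode v c := fun T hT => by
  have hsum := mul_pairSum_mem_pairCode hT (row_mem_systematicCode (borderMatrix v) none)
  rwa [show pairSum c _ = 1 from funext fun i => by simp [pairSum, borderMatrix], mul_one] at hsum

variable [NeZero p]

theorem sub_mem_swapGroup (hT : T ∈ swapGroup v c) (d : ZMod p) :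
    (fun j => T (j - d)) ∈ swapGroup v c := by
  rw [mem_swapGroup, ← mul_inv_eq_of_eq_mul (translate_mul_swapPairs c d T)]
  have hd := translate_mem_autGroup v d
  exact mul_mem (mul_mem hd hT) (inv_mem hd)

theorem sub_mem_pairCode (hT : T ∈ pairCode v c) (d : ZMod p) :
    (fun j => T (j - d)) ∈ pairCode v c := by
  rw [mem_pairCode, ← double_comp_translate]
  exact (comp_mem_iff_of_mem_autGroup (translate_mem_autGroup v (-d)) _).mpr hT

theorem hammingNorm_double (c : ZMod p) (T : ZMod p → ZMod 2) :
    hammingNorm (double c T) = 2 * hammingNorm T := by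
  rw [hammingNorm_point, hammingNorm_eq_sum_val T, two_mul]
  simpa using Equiv.sum_comp (Equiv.subRight c) fun i => (T i).val

theorem dot_double (c : ZMod p) (T : ZMod p → ZMod 2) (u : Point p → ZMod 2) :
    dot (double c T) u = ∑ i, T i * pairSum c u i := by
  rw [dot, Fintype.sum_sum_type, Fintype.sum_option, Fintype.sum_option,
    ← Equiv.sum_comp (Equiv.addRight c) fun i => double c T (.inr (some i)) * u (.inr (some i))]
  simp [pairSum, mul_add, Finset.sum_add_distrib]

theorem IsAdmissible.two_lt_hammingNorm_of_mem_pairCode (hv : IsAdmissible v)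
    (hT : T ∈ pairCode v c) (hT0 : T ≠ 0) : 2 < hammingNorm T := by
  have h := hv.four_lt_hammingNorm _ hT fun h => hT0 <| by
    rwa [← hammingNorm_eq_zero, hammingNorm_double, mul_eq_zero_iff_left two_ne_zero,
      hammingNorm_eq_zero] at h
  rw [hammingNorm_double] at h
  omega

theorem IsAdmissible.single_add_single_notMem_pairCode (hv : IsAdmissible v) {i j : ZMod p}
    (hij : i ≠ j) : Pi.single i 1 + Pi.single j 1 ∉ pairCode v c := fun h => by
  refine (hv.two_lt_hammingNorm_of_mem_pairCode h fun h0 => ?_).not_ge <|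
    (hammingNorm_le_card_of_support_subset {i, j} fun k hk => ?_).trans Finset.card_le_two
  · simpa [hij] using congrFun h0 i
  · contrapose! hk
    simp_all

theorem IsAdmissible.single_notMem_pairCode (hv : IsAdmissible v) (i : ZMod p) :
    Pi.single i 1 ∉ pairCode v c := fun h => by
  have hle := hammingNorm_le_card_of_support_subset (u := (Pi.single i 1 : ZMod p → ZMod 2)) {i}
    fun k hk => by
      contrapose! hk
      simp_all
  have := hv.two_lt_hammingNorm_of_mem_pairCode h (by simp)
  rw [Finset.card_singleton] at hle
  omega

theorem IsAdmissible.index_pairCode_ne_two [Nontrivial (ZMod p)] (hv : IsAdmissible v) :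
    (pairCode v c).index ≠ 2 := fun h =>
  hv.single_add_single_notMem_pairCode zero_ne_one <|
    (AddSubgroup.add_mem_iff_of_index_two h).mpr <|
      iff_of_false (hv.single_notMem_pairCode 0) (hv.single_notMem_pairCode 1)

theorem IsAdmissible.one_notMem_pairCode (hp : Odd p) (hv : IsAdmissible v) :
    1 ∉ pairCode v c := fun h => by
  have h4 := hv.doublyEven _ h
  have h1 : hammingNorm (1 : ZMod p → ZMod 2) = p := by
    simp [hammingNorm]
  rw [hammingNorm_double, h1] at h4
  obtain ⟨m, rfl⟩ := hp
  omega

theorem IsAdmissible.exists_pairSum_ne (hv : IsAdmissible v) (c : ZMod p) {i j : ZMod p}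
    (hij : i ≠ j) : ∃ u ∈ code v, pairSum c u i ≠ pairSum c u j := by
  by_contra! heq
  refine hv.single_add_single_notMem_pairCode hij (c := c) ?_
  rw [mem_pairCode, hv.isSelfDual]
  intro u hu
  rw [dot_double]
  simp [add_mul, Finset.sum_add_distrib, Pi.single_apply, heq u hu,
    CharTwo.add_self_eq_zero]

end SwapGroup

section Stabilizer

open Equiv MulAction

variable {p : ℕ} [Fact p.Prime] {v : ZMod p → ZMod 2} {K : Subgroup (Perm (Point p))}

theorem IsAdmissible.swapGroup_eq_bot {q : ℕ} (hq : q.Prime) (hpq : p = 2 * q + 1)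
    (hv : IsAdmissible v) (c : ZMod p) : swapGroup v c = ⊥ := by
  by_contra hne
  have heq : swapGroup v c = pairCode v c :=
    eq_of_le_of_sub_mem hq hpq (fun _ => sub_mem_swapGroup) (fun _ => sub_mem_pairCode)
      (hv.one_notMem_pairCode ⟨q, hpq⟩) hv.index_pairCode_ne_two (swapGroup_le_pairCode v c) hne
  refine hne (heq.trans (eq_bot_of_mul_mem (D := pairSum c '' code v) ?_ ?_ fun T hT hT0 =>
    one_lt_two.trans (hv.two_lt_hammingNorm_of_mem_pairCode hT hT0)))
  · rintro T hT _ ⟨u, hu, rfl⟩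
    exact mul_pairSum_mem_pairCode (heq ▸ hT) hu
  · intro i j hij
    obtain ⟨u, hu, hne⟩ := hv.exists_pairSum_ne c hij
    exact ⟨_, ⟨u, hu, rfl⟩, hne⟩

theorem IsAdmissible.eq_bot_of_apply_none {q : ℕ} (hq : q.Prime) (hpq : p = 2 * q + 1)
    (hv : IsAdmissible v) (hK : K ≤ autGroup (code v))
    (hnorm : translations p ≤ Subgroup.normalizer (K : Set (Perm (Point p))))
    (hpK : ¬ p ∣ Nat.card K) (hinl : ∀ k ∈ K, k (.inl none) = .inl none)
    (hinr : ∀ k ∈ K, k (.inr none) = .inr none) : K = ⊥ := by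
  rw [Subgroup.eq_bot_iff_forall]
  obtain ⟨c, hc⟩ := exists_forall_eq_swapPairs hnorm hpK hinl hinr
  intro k hk
  obtain ⟨T, rfl⟩ := hc k hk
  have hT : T ∈ swapGroup v c := hK hk
  rw [hv.swapGroup_eq_bot hq hpq, AddSubgroup.mem_bot] at hT
  rw [hT, swapPairs_zero]

theorem IsAdmissible.eq_bot_of_apply_inl_none {q : ℕ} (hq : q.Prime) (hpq : p = 2 * q + 1)
    (hp : ¬ IsPrimePow (p + 1)) (hp' : ¬ IsPrimePow (2 * p + 1)) (hv : IsAdmissible v)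
    (hK : K ≤ autGroup (code v))
    (hnorm : translations p ≤ Subgroup.normalizer (K : Set (Perm (Point p))))
    (hpK : ¬ p ∣ Nat.card K) (hinl : ∀ k ∈ K, k (.inl none) = .inl none) : K = ⊥ := by
  rw [← Subgroup.card_eq_one, Nat.eq_one_iff_not_exists_prime_dvd]
  intro r hr hrK
  have := Fact.mk hr
  obtain ⟨Q, hQK, hQnorm, hQcard⟩ :=
    exists_sylow_le_of_le_normalizer isPGroup_translations hnorm hpK r
  have hQbot : Q = ⊥ := hv.eq_bot_of_apply_none hq hpq (hQK.trans hK) hQnorm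
    (fun h => hpK (h.trans (Subgroup.card_dvd_of_le hQK))) (fun k hk => hinl k (hQK hk))
    fun k hk => apply_inr_none_of_isPGroup (IsPGroup.of_card hQcard) hp hp' hQnorm
      (fun k hk => hinl k (hQK hk)) hk
  rw [hQbot, Subgroup.card_bot, eq_comm, Nat.pow_eq_one] at hQcard
  exact hQcard.elim hr.ne_one (hr.factorization_pos_of_dvd Nat.card_pos.ne' hrK).ne'

theorem IsAdmissible.mem_translations_of_apply_inl_none {q : ℕ} [Fact q.Prime]
    (hpq : p = 2 * q + 1) (hq : q % 4 = 3) (hp : ¬ IsPrimePow (p + 1))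
    (hp' : ¬ IsPrimePow (2 * p + 1)) (hv : IsAdmissible v) {h : Perm (Point p)}
    (hh : h ∈ autGroup (code v)) (hfix : h (.inl none) = .inl none) : h ∈ translations p := by
  let H := autGroup (code v) ⊓ stabilizer (Perm (Point p)) (.inl none : Point p)
  have hPH : translations p ≤ H := le_inf (translations_le_autGroup v) <| by
    rintro _ ⟨c, rfl⟩
    exact translate_inl_none c.toAdd
  obtain ⟨K, hKH, hnorm, hcard, hpK⟩ :=
    exists_complement_le_of_inf_normalizer_le isPGroup_translations hPH fun g hg =>
      hv.mem_translations_of_mem_normalizer hpq hq hg.1.1 hg.1.2 hg.2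
  have hK : K = ⊥ := hv.eq_bot_of_apply_inl_none Fact.out hpq hp hp' (hKH.trans inf_le_left) hnorm
    hpK fun k hk => (hKH hk).2
  rw [hK, Subgroup.card_bot, one_mul] at hcard
  exact Subgroup.eq_of_le_of_card_ge hPH hcard.ge ▸ (⟨hh, hfix⟩ : h ∈ H)

end Stabilizer

section AutomorphismGroupOrder

open Equiv MulAction

variable {p : ℕ} {v : ZMod p → ZMod 2}

theorem translate_pow_card (c : ZMod p) : translate c ^ p = 1 := by
  have := pow_card_eq_one' (x := (⟨_, translate_mem_translations c⟩ : translations p))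
  rw [card_translations] at this
  exact congrArg Subtype.val this

variable [Fact p.Prime]

theorem negSwap_mem_normalizer :
    negSwap p ∈ Subgroup.normalizer (translations p : Set (Perm (Point p))) :=
  mem_normalizer_translations.mpr fun c =>
    ⟨-c, mul_inv_eq_iff_eq_mul.mp (negSwap_conj_translate c)⟩

theorem exists_conj_translate_notMem_normalizer (hp : Odd p) {k : Perm (Point p)}
    (hk : k (.inl (some 0)) = .inl none) : ∃ c,
      k * translate c * k⁻¹ ∉ Subgroup.normalizer (translations p : Set (Perm (Point p))) := by
  by_contra! h
  have hval {c : ZMod p} (hc : c ≠ 0) : k (.inl (some c)) = .inr none := by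
    have hor := apply_eq_inl_none_or_eq_inr_none_of_mem_normalizer (h c) (z := .inl none) rfl
    rw [Perm.mul_apply, Perm.mul_apply, Perm.inv_eq_iff_eq.mpr hk.symm, translate_inl_some,
      zero_add] at hor
    exact hor.resolve_left fun h0 => hc (by simpa using k.injective (h0.trans hk.symm))
  have heq := k.injective ((hval one_ne_zero).trans (hval (neg_ne_zero.mpr one_ne_zero)).symm)
  have hp2 : p ≠ 2 := by rintro rfl; exact absurd hp (by decide)
  have := Fact.mk ((Fact.out : p.Prime).two_le.lt_of_ne' hp2)
  exact ZMod.neg_one_ne_one (by simpa using heq.symm)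

variable {q : ℕ} [Fact q.Prime] {M : Subgroup (Perm (Point p))}

theorem IsAdmissible.card_eq_mul_ncard_orbit (hpq : p = 2 * q + 1) (hq : q % 4 = 3)
    (hp : ¬ IsPrimePow (p + 1)) (hp' : ¬ IsPrimePow (2 * p + 1)) (hv : IsAdmissible v)
    (hPM : translations p ≤ M) (hM : M ≤ autGroup (code v)) :
    Nat.card M = p * (orbit M (.inl none : Point p)).ncard := by
  have hstab : (stabilizer M (.inl none : Point p)).map M.subtype = translations p := by
    refine le_antisymm ?_ fun σ hσ => ⟨⟨σ, hPM hσ⟩, ?_, rfl⟩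
    · rintro _ ⟨k, hk, rfl⟩
      exact hv.mem_translations_of_apply_inl_none hpq hq hp hp' (hM k.2) hk
    · obtain ⟨c, rfl⟩ := hσ
      exact translate_inl_none c.toAdd
  rw [← index_stabilizer, ← (stabilizer M (.inl none : Point p)).card_mul_index,
    ← Subgroup.card_subtype, hstab, card_translations]

theorem IsAdmissible.card_autGroup_inf_normalizer (hpq : p = 2 * q + 1) (hq : q % 4 = 3)
    (hp : ¬ IsPrimePow (p + 1)) (hp' : ¬ IsPrimePow (2 * p + 1)) (hv : IsAdmissible v) :
    Nat.card (autGroup (code v) ⊓ Subgroup.normalizer (translations p : Set (Perm (Point p))) :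
      Subgroup (Perm (Point p))) = 2 * p := by
  have horbit : orbit (autGroup (code v) ⊓ Subgroup.normalizer
      (translations p : Set (Perm (Point p))) : Subgroup (Perm (Point p))) (.inl none : Point p) =
      {.inl none, .inr none} := by
    refine Set.Subset.antisymm ?_ (Set.pair_subset (mem_orbit_self _) ?_)
    · rintro _ ⟨⟨k, hk⟩, rfl⟩
      exact apply_eq_inl_none_or_eq_inr_none_of_mem_normalizer hk.2 rfl
    · exact ⟨⟨negSwap p, hv.negSwap_mem_autGroup, negSwap_mem_normalizer⟩, rfl⟩
  rw [hv.card_eq_mul_ncard_orbit hpq hq hp hp'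
    (le_inf (translations_le_autGroup v) Subgroup.le_normalizer) inf_le_left, horbit,
    Set.ncard_pair (by simp), mul_comm]

theorem IsAdmissible.inf_normalizer_le_of_negSwap_notMem (hpq : p = 2 * q + 1) (hq : q % 4 = 3)
    (hv : IsAdmissible v) (hPM : translations p ≤ M) (hM : M ≤ autGroup (code v))
    (hneg : negSwap p ∉ M) :
    M ⊓ Subgroup.normalizer (translations p : Set (Perm (Point p))) ≤ translations p := by
  rintro h ⟨hh, hnorm⟩
  rcases apply_eq_inl_none_or_eq_inr_none_of_mem_normalizer hnorm (z := .inl none) rfl with h0 | h0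
  · exact hv.mem_translations_of_mem_normalizer hpq hq (hM hh) h0 hnorm
  · refine absurd ((M.mul_mem_cancel_right hh).mp (hPM ?_)) hneg
    exact hv.mem_translations_of_mem_normalizer hpq hq (mul_mem hv.negSwap_mem_autGroup (hM hh))
      (by rw [Perm.mul_apply, h0, negSwap_inr_none]) (mul_mem negSwap_mem_normalizer hnorm)

theorem apply_inl_none_of_odd_card (hodd : Odd (Nat.card M)) (hle : Nat.card M ≤ p)
    (hnorm : translations p ≤ Subgroup.normalizer (M : Set (Perm (Point p)))) {k : Perm (Point p)}
    (hk : k ∈ M) : k (.inl none) = .inl none := by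
  have hcard := ncard_of_translate_mem (O := orbit M (.inl none : Point p)) fun z hz c =>
    translate_mem_orbit hnorm c hz
  have hdvd : (orbit M (.inl none : Point p)).ncard ∣ Nat.card M :=
    index_stabilizer M (.inl none : Point p) ▸ Subgroup.index_dvd_card _
  have hodd' := Nat.odd_iff.mp (hodd.of_dvd_nat hdvd)
  have hle' := (Nat.le_of_dvd Nat.card_pos hdvd).trans hle
  rw [if_pos (mem_orbit_self _)] at hcard
  have hone : (orbit M (.inl none : Point p)).ncard = 1 := by
    split_ifs at hcard <;> omega
  obtain ⟨y, hy⟩ := Set.ncard_eq_one.mp hone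
  have hmem {z : Point p} (hz : z ∈ orbit M (.inl none : Point p)) : z = y := by simpa [hy] using hz
  exact (hmem ⟨⟨k, hk⟩, rfl⟩).trans (hmem (mem_orbit_self _)).symm

theorem IsAdmissible.card_ne_of_translations_le_normalizer (hpq : p = 2 * q + 1) (hq : q % 4 = 3)
    (hp : ¬ IsPrimePow (p + 1)) (hp' : ¬ IsPrimePow (2 * p + 1)) (hv : IsAdmissible v)
    (hM : M ≤ autGroup (code v))
    (hnorm : translations p ≤ Subgroup.normalizer (M : Set (Perm (Point p)))) :
    Nat.card M ≠ p + 1 := by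
  intro hcard
  obtain ⟨n, hn⟩ | ⟨r, hr, hrp, hodd⟩ := (p + 1).eq_two_pow_or_exists_odd_prime_and_dvd
  · have hn0 : n ≠ 0 := by
      rintro rfl
      exact (Fact.out : p.Prime).ne_zero (Nat.succ_injective hn)
    exact hp (hn ▸ Nat.prime_two.isPrimePow.pow hn0)
  have := Fact.mk hr
  obtain ⟨Q, hQM, hQnorm, hQ⟩ := exists_sylow_le_of_le_normalizer isPGroup_translations hnorm
    (hcard ▸ (Nat.dvd_add_right dvd_rfl).not.mpr (Fact.out : p.Prime).not_dvd_one) r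
  rw [hcard] at hQ
  have hf : (p + 1).factorization r ≠ 0 := (hr.factorization_pos_of_dvd p.succ_ne_zero hrp).ne'
  have hle : Nat.card Q ≤ p := by
    rw [hQ]
    refine Nat.lt_succ_iff.mp ((Nat.ordProj_le r p.succ_ne_zero).lt_of_ne fun h => hp ?_)
    have hpow : IsPrimePow (r ^ p.succ.factorization r) := hr.isPrimePow.pow hf
    rwa [h] at hpow
  have hQP : Q ≤ translations p := fun k hk =>
    hv.mem_translations_of_apply_inl_none hpq hq hp hp' (hM (hQM hk))
      (apply_inl_none_of_odd_card (hQ ▸ hodd.pow) hle hQnorm hk)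
  have hQdvd := Subgroup.card_dvd_of_le hQP
  rw [hQ, card_translations] at hQdvd
  have hdvd : r ∣ p := (dvd_pow_self r hf).trans hQdvd
  exact hr.not_dvd_one ((Nat.dvd_add_right hdvd).mp hrp)

theorem IsAdmissible.exists_index_eq_two_notMem (hpq : p = 2 * q + 1) (hq : q % 4 = 3)
    (hp : ¬ IsPrimePow (p + 1)) (hp' : ¬ IsPrimePow (2 * p + 1)) (hv : IsAdmissible v)
    (hcard : Nat.card (autGroup (code v)) = p * (2 * (p + 1))) {k : Perm (Point p)}
    (hk : k ∈ autGroup (code v)) (hk0 : k (.inl (some 0)) = .inl none) :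
    ∃ M : Subgroup (autGroup (code v)), M.index = 2 ∧ ⟨negSwap p, hv.negSwap_mem_autGroup⟩ ∉ M := by
  obtain ⟨c, hc⟩ := exists_conj_translate_notMem_normalizer ⟨q, hpq⟩ hk0
  refine DoubleCirculant.exists_index_eq_two_notMem
    (N := (Subgroup.normalizer (translations p : Set (Perm (Point p)))).subgroupOf _)
    (s := ⟨_, translate_mem_autGroup v c⟩) Fact.out (by omega) ?_
    (Subtype.ext (translate_pow_card c)) (fun h => hc (h ⟨k, hk⟩)) (Subtype.ext negSwap_mul_self)
    (Subtype.ext ((negSwap_conj_translate c).trans (inv_translate c).symm))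
  have hindex := Subgroup.relIndex_mul_relIndex ⊥ _ _ bot_le (inf_le_left (a := autGroup (code v))
    (b := Subgroup.normalizer (translations p : Set (Perm (Point p)))))
  rw [Subgroup.relIndex_bot_left, Subgroup.relIndex_bot_left, Subgroup.inf_relIndex_left,
    hv.card_autGroup_inf_normalizer hpq hq hp hp', hcard] at hindex
  refine Nat.eq_of_mul_eq_mul_left (Nat.mul_pos two_pos (Fact.out : p.Prime).pos) ?_
  exact hindex.trans (by ring)

theorem IsAdmissible.inl_none_notMem_orbit (hpq : p = 2 * q + 1) (hq : q % 4 = 3)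
    (hp : ¬ IsPrimePow (p + 1)) (hp' : ¬ IsPrimePow (2 * p + 1)) (hv : IsAdmissible v)
    (hcard : Nat.card (autGroup (code v)) = p * (2 * (p + 1))) :
    .inl none ∉ orbit (autGroup (code v)) (.inl (some 0) : Point p) := by
  rintro ⟨⟨k, hkG⟩, hk⟩
  obtain ⟨M, hM, hneg⟩ := hv.exists_index_eq_two_notMem hpq hq hp hp' hcard hkG hk
  let L := M.map (autGroup (code v)).subtype
  have hL : L ≤ autGroup (code v) := Subgroup.map_subtype_le M
  have hPL : translations p ≤ L := by
    rintro _ ⟨c, rfl⟩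
    have := NeZero.mk (Ring.two_ne_zero (R := ZMod p) (by rw [ZMod.ringChar_zmod_n]; omega))
    refine ⟨_, Subgroup.mul_self_mem_of_index_two hM
      ⟨_, translate_mem_autGroup v (c.toAdd / 2)⟩, ?_⟩
    exact (translate_add _ _).symm.trans (congrArg translate (add_halves _))
  have hnegL : negSwap p ∉ L := by
    rintro ⟨g, hg, hgneg⟩
    exact hneg (Subtype.ext (a1 := g) (a2 := ⟨_, hv.negSwap_mem_autGroup⟩) hgneg ▸ hg)
  obtain ⟨K, hKL, hnorm, hK, -⟩ := exists_complement_le_of_inf_normalizer_le isPGroup_translations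
    hPL (hv.inf_normalizer_le_of_negSwap_notMem hpq hq hPL hL hnegL)
  refine hv.card_ne_of_translations_le_normalizer hpq hq hp hp' (hKL.trans hL) hnorm ?_
  have hMcard := M.card_mul_index
  rw [hM, hcard, ← Subgroup.card_subtype, ← hK, card_translations] at hMcard
  refine Nat.eq_of_mul_eq_mul_left (Nat.mul_pos two_pos (Fact.out : p.Prime).pos) ?_
  linarith

theorem IsAdmissible.card_autGroup (hpq : p = 2 * q + 1) (hq : q % 4 = 3)
    (hp : ¬ IsPrimePow (p + 1)) (hp' : ¬ IsPrimePow (2 * p + 1)) (hv : IsAdmissible v) :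
    Nat.card (autGroup (code v)) = 2 * p := by
  have hcard := hv.card_eq_mul_ncard_orbit hpq hq hp hp' (translations_le_autGroup v) le_rfl
  have hPnorm := (translations_le_autGroup v).trans Subgroup.le_normalizer
  set O := orbit (autGroup (code v)) (.inl none : Point p)
  have hnegSwap {z : Point p} (hz : z ∈ O) : negSwap p z ∈ O := by
    obtain ⟨g, rfl⟩ := hz
    exact ⟨⟨_, hv.negSwap_mem_autGroup⟩ * g, rfl⟩
  have hinl : .inl none ∈ O := mem_orbit_self _
  have hncard := ncard_of_translate_mem (O := O) fun z hz c => translate_mem_orbit hPnorm c hz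
  have hinr : .inr none ∈ O := hnegSwap hinl
  rw [if_pos hinl, if_pos hinr] at hncard
  by_cases h0 : .inl (some 0) ∈ O
  · have h0' : .inr (some 0) ∈ O := by simpa using hnegSwap h0
    rw [if_pos h0, if_pos h0'] at hncard
    refine absurd (mem_orbit_symm.mp h0) (hv.inl_none_notMem_orbit hpq hq hp hp' ?_)
    rw [hcard, hncard]
    ring
  · have h0' : .inr (some 0) ∉ O := fun h => h0 (by simpa using hnegSwap h)
    rw [if_neg h0, if_neg h0'] at hncard
    rw [hcard, hncard, mul_comm]

end AutomorphismGroupOrder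

end DoubleCirculant

theorem aut_group_bordered_dcc_96_doubly_even_general {p q : ℕ} [Fact p.Prime] [Fact q.Prime]
    (hpq : p = 2 * q + 1) (hq : q % 4 = 3) (hp : ¬ IsPrimePow (p + 1))
    (hp' : ¬ IsPrimePow (2 * p + 1)) {B : Matrix (Fin (p + 1)) (Fin (p + 1)) (ZMod 2)}
    (hB : IsBorderMatrix B) (hsd : IsSelfDual (borderedDCC B))
    (hde : ∀ x ∈ borderedDCC B, hammingNorm x % 4 = 0)
    (hmin : ∀ x ∈ borderedDCC B, x ≠ 0 → 4 < hammingNorm x) :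
    autGroupOrder (borderedDCC B) = 2 * p := by
  obtain ⟨v, hv, hcard⟩ := DoubleCirculant.exists_isAdmissible_of_isBorderMatrix hB hsd hde hmin
  rw [← hcard]
  exact hv.card_autGroup hpq hq hp hp'

theorem aut_group_bordered_dcc_96_doubly_even (B : Matrix (Fin 48) (Fin 48) (ZMod 2))
    (hB : IsBorderMatrix (n := 47) B) (hsd : IsSelfDual (borderedDCC (n := 47) B))
    (hde : ∀ x ∈ borderedDCC (n := 47) B, hammingNorm x % 4 = 0)
    (hmin : MinWeightIs (borderedDCC (n := 47) B) 16) :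
    autGroupOrder (borderedDCC (n := 47) B) = 94 := by
  have : Fact (Nat.Prime 47) := ⟨by norm_num⟩
  have : Fact (Nat.Prime 23) := ⟨by norm_num⟩
  have h48 : ¬ IsPrimePow (47 + 1) := fun h => absurd
    ((isPrimePow_iff_unique_prime_dvd.mp h).unique (y₁ := 2) (y₂ := 3) (by norm_num) (by norm_num))
    (by decide)
  have h95 : ¬ IsPrimePow (2 * 47 + 1) := fun h => absurd
    ((isPrimePow_iff_unique_prime_dvd.mp h).unique (y₁ := 5) (y₂ := 19) (by norm_num) (by norm_num))
    (by decide)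
  exact aut_group_bordered_dcc_96_doubly_even_general (q := 23) rfl rfl h48 h95 hB hsd hde
    fun x hx hx0 => (by decide : 4 < 16).trans_le (hmin.2 x hx hx0)
end
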